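/- Let K be a cubic number field (a number field of degree 3 over ℚ) with ring of integers 𝓞. For n ∈ ℕ, let bₙ(K) denote the number of subrings of 𝓞 of additive index n which contain 1, and let j_K(n) denote the number of nonzero ideals of 𝓞 of absolute norm n. Then for every real s > 1 the following identity of convergent series holds: (∑_{n≥1} bₙ(K)·n^{−s})·(∑_{n≥1} j_K(n)·n^{−2s}) = (∑_{n≥1} j_K(n)·n^{−s})·(∑_{n≥1} n^{−2s})·(∑_{n≥1} n^{1−3s}). Equivalently, η_K(s) = (ζ_K(s)/ζ_K(2s))·ζ(2s)·ζ(3s−1). -/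

import Mathlib

open scoped NumberField

/-- `bₙ(K)`: the number of subrings (unital, containing `1`) of the ring of integers of `K`
of additive index `n`. -/
noncomputable def orderCount (K : Type*) [Field K] [NumberField K] (n : ℕ) : ℕ :=
  Nat.card {S : Subring (𝓞 K) // S.toAddSubgroup.index = n}

/-- `j_K(n)`: the number of nonzero ideals of the ring of integers of `K` of absolute
norm `n`. -/
noncomputable def idealCount (K : Type*) [Field K] [NumberField K] (n : ℕ) : ℕ :=
  Nat.card {I : Ideal (𝓞 K) // I ≠ ⊥ ∧ Ideal.absNorm I = n}


/-! ### Counting subgroups of a rank two lattice -/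

section LatticeCount

variable {L : Type*} [AddCommGroup L]

/-- Multiplication by `p`, as an endomorphism. -/
def mulBy (L : Type*) [AddCommGroup L] (p : ℕ) : L →+ L := nsmulAddMonoidHom p

lemma mulBy_apply (p : ℕ) (x : L) : mulBy L p x = p • x := rfl

/-- The subgroup `pM`. -/
def pmul (p : ℕ) (M : AddSubgroup L) : AddSubgroup L := M.map (mulBy L p)

/-- The subgroup of `x` with `p x ∈ M`. -/
def pdiv (p : ℕ) (M : AddSubgroup L) : AddSubgroup L := M.comap (mulBy L p)

lemma mem_pmul {p : ℕ} {M : AddSubgroup L} {x : L} : x ∈ pmul p M ↔ ∃ y ∈ M, p • y = x := Iff.rfl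

lemma mem_pdiv {p : ℕ} {M : AddSubgroup L} {x : L} : x ∈ pdiv p M ↔ p • x ∈ M := Iff.rfl

lemma nsmul_index_mem (M : AddSubgroup L) (x : L) : M.index • x ∈ M :=
  AddSubgroup.nsmul_index_mem M x

lemma relIndex_nsmul_mem {M N : AddSubgroup L} {x : L} (hx : x ∈ N) :
    M.relIndex N • x ∈ M := by
  have := AddSubgroup.nsmul_index_mem (M.addSubgroupOf N) ⟨x, hx⟩
  exact this

lemma finite_index_eq {n : ℕ} (h : (pmul n (⊤ : AddSubgroup L)).index ≠ 0) :
    {M : AddSubgroup L | M.index = n}.Finite := by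
  have hf : Finite (L ⧸ pmul n (⊤ : AddSubgroup L)) := AddSubgroup.index_ne_zero_iff_finite.mp h
  have : Set.Finite (Set.range
    (fun N : AddSubgroup (L ⧸ pmul n (⊤ : AddSubgroup L)) => N.comap (QuotientAddGroup.mk' _))) :=
    Set.finite_range _
  refine this.subset ?_
  intro M hM
  refine ⟨M.map (QuotientAddGroup.mk' _), ?_⟩
  simp only
  rw [AddSubgroup.comap_map_eq, QuotientAddGroup.ker_mk', sup_eq_left]
  rintro _ ⟨y, -, rfl⟩
  have := nsmul_index_mem M y
  change M.index = n at hM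
  rw [hM] at this
  exact this

lemma card_index_p_elem_aux {V : Type*} [AddCommGroup V] {p : ℕ} [Fact p.Prime]
    [Module (ZMod p) V] (hc : Nat.card V = p ^ 2) :
    Nat.card {N : AddSubgroup V // N.index = p} = p + 1 := by
  have hp : p.Prime := Fact.out
  have : Finite V := Nat.finite_of_card_ne_zero (by rw [hc]; exact pow_ne_zero _ hp.ne_zero)
  have hfr : Module.finrank (ZMod p) V = 2 := by
    have h := FiniteField.pow_finrank_eq_natCard p V
    rw [hc] at h
    exact Nat.pow_right_injective hp.two_le h
  have h1 := Projectivization.card_of_finrank_two (ZMod p) V hfr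
  rw [Nat.card_zmod] at h1
  rw [← h1]
  rw [Nat.card_congr (Projectivization.equivSubmodule (ZMod p) V)]
  let e : AddSubgroup V ≃o Submodule (ZMod p) V := AddSubgroup.toZModSubmodule p
  refine Nat.card_congr (e.toEquiv.subtypeEquiv ?_)
  intro N
  have h2 := FiniteField.pow_finrank_eq_natCard p (e N : Submodule (ZMod p) V)
  have h3 : Nat.card (e N : Submodule (ZMod p) V) = Nat.card N := rfl
  rw [h3] at h2
  have h4 := N.card_mul_index
  rw [hc, ← h2] at h4
  change N.index = p ↔ Module.finrank (ZMod p) (e N : Submodule (ZMod p) V) = 1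
  constructor
  · intro h
    rw [h, ← pow_succ] at h4
    have := Nat.pow_right_injective hp.two_le h4
    omega
  · intro h
    rw [h, pow_one, sq] at h4
    exact Nat.eq_of_mul_eq_mul_left hp.pos h4

/-- A group of order `p²` killed by `p` has `p + 1` subgroups of index `p`. -/
lemma card_index_p_elem {V : Type*} [AddCommGroup V] {p : ℕ} (hp : p.Prime)
    (hV : ∀ x : V, p • x = 0) (hc : Nat.card V = p ^ 2) :
    Nat.card {N : AddSubgroup V // N.index = p} = p + 1 :=
  @card_index_p_elem_aux V _ p ⟨hp⟩ (AddCommGroup.zmodModule hV) hc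

lemma card_index_p {M : Type*} [AddCommGroup M] {p : ℕ} (hp : p.Prime)
    (hc : (pmul p (⊤ : AddSubgroup M)).index = p ^ 2) :
    Nat.card {N : AddSubgroup M // N.index = p} = p + 1 := by
  set P := pmul p (⊤ : AddSubgroup M)
  rw [← card_index_p_elem (V := M ⧸ P) hp ?_ hc]
  · symm
    refine Nat.card_congr (Equiv.ofBijective
      (fun N => ⟨N.1.comap (QuotientAddGroup.mk' P), ?_⟩) ⟨?_, ?_⟩)
    · rw [AddSubgroup.index_comap_of_surjective _ (QuotientAddGroup.mk'_surjective P)]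
      exact N.2
    · intro N N' h
      have := congrArg Subtype.val h
      exact Subtype.ext (AddSubgroup.comap_injective (QuotientAddGroup.mk'_surjective P) this)
    · rintro ⟨N, hN⟩
      have hPN : P ≤ N := by
        rintro _ ⟨y, -, rfl⟩
        have := nsmul_index_mem N y
        rwa [hN] at this
      refine ⟨⟨N.map (QuotientAddGroup.mk' P), ?_⟩, ?_⟩
      · rw [AddSubgroup.index_map_eq _ (QuotientAddGroup.mk'_surjective P)]
        · exact hN
        · rwa [QuotientAddGroup.ker_mk']
      · apply Subtype.ext
        simp only
        rw [AddSubgroup.comap_map_eq, QuotientAddGroup.ker_mk', sup_eq_left]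
        exact hPN
  · intro x
    induction x using QuotientAddGroup.induction_on with
    | H y =>
      rw [← QuotientAddGroup.mk_nsmul, QuotientAddGroup.eq_zero_iff]
      exact ⟨y, trivial, rfl⟩

/-- Standing hypotheses on `L`: multiplication by `p` is injective with cokernel of order `p²`. -/
structure RkTwo (L : Type*) [AddCommGroup L] (p : ℕ) : Prop where
  prime : p.Prime
  inj : Function.Injective (mulBy L p)
  idx : (pmul p (⊤ : AddSubgroup L)).index = p ^ 2

namespace RkTwo

lemma pmul_le (p : ℕ) (M : AddSubgroup L) : pmul p M ≤ M := by
  rintro _ ⟨y, hy, rfl⟩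
  exact M.nsmul_mem hy p


lemma relIndex_pmul {p : ℕ} (h : RkTwo L p)
    (M N : AddSubgroup L) : (pmul p M).relIndex (pmul p N) = M.relIndex N :=
  AddSubgroup.relIndex_map_map_of_injective _ _ h.inj

lemma pmul_injective {p : ℕ} (h : RkTwo L p)
    : Function.Injective (pmul p : AddSubgroup L → AddSubgroup L) :=
  AddSubgroup.map_injective h.inj

lemma index_pmul {p : ℕ} (h : RkTwo L p)
    (M : AddSubgroup L) : (pmul p M).index = p ^ 2 * M.index := by
  have h1 : pmul p M ≤ pmul p ⊤ := AddSubgroup.map_mono le_top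
  rw [← AddSubgroup.relIndex_mul_index h1, h.relIndex_pmul, h.idx, AddSubgroup.relIndex_top_right,
    mul_comm]

lemma relIndex_pmul_self {p : ℕ} (h : RkTwo L p)
    {M : AddSubgroup L} (hM : M.index ≠ 0) :
    (pmul p M).relIndex M = p ^ 2 := by
  have h1 := AddSubgroup.relIndex_mul_index (pmul_le p M)
  rw [h.index_pmul] at h1
  exact Nat.eq_of_mul_eq_mul_right (Nat.pos_of_ne_zero hM) h1

lemma index_pow {p : ℕ} (h : RkTwo L p)
    (n : ℕ) : (pmul (p ^ n) (⊤ : AddSubgroup L)).index = p ^ (2 * n) := by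
  induction n with
  | zero =>
    have : pmul (p ^ 0) (⊤ : AddSubgroup L) = ⊤ := by
      ext x; simp [mem_pmul]
    rw [this]; simp
  | succ n ih =>
    have : pmul (p ^ (n + 1)) (⊤ : AddSubgroup L) = pmul p (pmul (p ^ n) ⊤) := by
      ext x
      simp only [mem_pmul, AddSubgroup.mem_top, true_and, exists_exists_eq_and, pow_succ', mul_smul]
    rw [this, h.index_pmul, ih]; ring

lemma finite_index {p : ℕ} (h : RkTwo L p)
    (n : ℕ) : {M : AddSubgroup L | M.index = p ^ n}.Finite :=
  finite_index_eq (by rw [h.index_pow]; exact pow_ne_zero _ h.prime.ne_zero)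

/-- Subgroups of index `p` inside a finite index subgroup `M`. -/
lemma ncard_relIndex {p : ℕ} (h : RkTwo L p)
    {M : AddSubgroup L} (hM : M.index ≠ 0) :
    {N : AddSubgroup L | N ≤ M ∧ N.relIndex M = p}.ncard = p + 1 := by
  have hc : (pmul p (⊤ : AddSubgroup M)).index = p ^ 2 := by
    rw [← h.relIndex_pmul_self hM, AddSubgroup.relIndex]
    congr 1
    ext x
    simp only [mem_pmul, AddSubgroup.mem_addSubgroupOf, AddSubgroup.mem_top, true_and]
    constructor
    · rintro ⟨y, rfl⟩
      exact ⟨y, y.2, by simp⟩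
    · rintro ⟨y, hy, hyx⟩
      exact ⟨⟨y, hy⟩, Subtype.ext (by simpa using hyx)⟩
  rw [← card_index_p h.prime hc, ← Nat.card_coe_set_eq]
  refine Nat.card_congr (Equiv.ofBijective (fun N => ⟨N.1.addSubgroupOf M, N.2.2⟩) ⟨?_, ?_⟩)
  · rintro ⟨N, hN, _⟩ ⟨N', hN', _⟩ heq
    have := congrArg Subtype.val heq
    simp only at this
    apply Subtype.ext
    simp only
    rw [AddSubgroup.addSubgroupOf_inj, inf_eq_left.mpr hN, inf_eq_left.mpr hN'] at this
    exact this
  · rintro ⟨N, hN⟩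
    refine ⟨⟨N.map M.subtype, AddSubgroup.map_subtype_le N, ?_⟩, ?_⟩
    · rw [AddSubgroup.relIndex, AddSubgroup.addSubgroupOf,
        AddSubgroup.comap_map_eq_self_of_injective M.subtype_injective]
      exact hN
    · apply Subtype.ext
      simp only
      rw [AddSubgroup.addSubgroupOf,
        AddSubgroup.comap_map_eq_self_of_injective M.subtype_injective]

end RkTwo
end LatticeCount


section LatticeCount2

variable {L : Type*} [AddCommGroup L]

/-- Subgroups of index `p ^ b` not contained in `pL`. -/
def PrimSub (p b : ℕ) (M : AddSubgroup L) : Prop :=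
  M.index = p ^ b ∧ ¬ M ≤ pmul p ⊤

namespace RkTwo

lemma le_pdiv (p : ℕ) (M : AddSubgroup L) : M ≤ pdiv p M := fun _ hx => M.nsmul_mem hx p

lemma eq_of_le_of_index {M N : AddSubgroup L} (h : M ≤ N) (hi : M.index = N.index)
    (h0 : N.index ≠ 0) : M = N := by
  have h1 := AddSubgroup.relIndex_mul_index h
  rw [hi] at h1
  have h2 : M.relIndex N = 1 := by
    apply Nat.eq_of_mul_eq_mul_right (Nat.pos_of_ne_zero h0)
    rw [h1, one_mul]
  exact le_antisymm h (AddSubgroup.relIndex_eq_one.mp h2)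


lemma index_sup {p : ℕ} (h : RkTwo L p)
    {b : ℕ} {M : AddSubgroup L} (hM : PrimSub p (b + 1) M) :
    (M ⊔ pmul p ⊤).index = p := by
  have hp := h.prime
  have h1 : (M ⊔ pmul p ⊤).index ∣ p ^ 2 := by
    rw [← h.idx]; exact AddSubgroup.index_dvd_of_le le_sup_right
  obtain ⟨k, hk, hk'⟩ := (Nat.dvd_prime_pow hp).mp h1
  have hk2 : k ≠ 2 := by
    rintro rfl
    apply hM.2
    have := eq_of_le_of_index (le_sup_right : pmul p ⊤ ≤ M ⊔ pmul p ⊤) (by rw [h.idx, hk'])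
      (by rw [hk']; exact pow_ne_zero _ hp.ne_zero)
    rw [this]; exact le_sup_left
  have hk0 : k ≠ 0 := by
    rintro rfl
    rw [pow_zero, AddSubgroup.index_eq_one] at hk'
    have key : ∀ n (x : L), ∃ y, x - p ^ n • y ∈ M := by
      intro n
      induction n with
      | zero => intro x; exact ⟨x, by simp⟩
      | succ n ih =>
        intro x
        obtain ⟨y, hy⟩ := ih x
        have : y ∈ M ⊔ pmul p ⊤ := by rw [hk']; trivial
        obtain ⟨m, hm, z, ⟨w, -, rfl⟩, rfl⟩ := AddSubgroup.mem_sup.mp this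
        refine ⟨w, ?_⟩
        have : x - p ^ (n + 1) • w = (x - p ^ n • (m + mulBy L p w)) + p ^ n • m := by
          rw [mulBy_apply, smul_add, pow_succ, mul_smul]; abel
        rw [this]
        exact M.add_mem hy (M.nsmul_mem hm _)
    have : M = ⊤ := by
      rw [eq_top_iff]
      intro x _
      obtain ⟨y, hy⟩ := key (b + 1) x
      have h2 := nsmul_index_mem M y
      rw [hM.1] at h2
      simpa using M.add_mem hy h2
    have h3 := hM.1
    rw [this, AddSubgroup.index_top] at h3
    exact absurd h3 (Nat.one_lt_pow (by omega) hp.one_lt).ne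
  have : k = 1 := by omega
  rw [hk', this, pow_one]

lemma index_pdiv {p : ℕ} (h : RkTwo L p)
    {b : ℕ} {M : AddSubgroup L} (hM : PrimSub p (b + 1) M) :
    (pdiv p M).index = p ^ b := by
  have h1 : (pdiv p M).index = M.relIndex (pmul p ⊤) := by
    rw [pdiv, AddSubgroup.index_comap, pmul, ← AddMonoidHom.range_eq_map]
  have h2 := AddSubgroup.relIndex_mul_index (le_sup_left : M ≤ M ⊔ pmul p ⊤)
  rw [h.index_sup hM, AddSubgroup.relIndex_sup_left, hM.1, pow_succ] at h2
  rw [h1]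
  exact Nat.eq_of_mul_eq_mul_right h.prime.pos h2

lemma prim_pdiv {p : ℕ} (h : RkTwo L p)
    {b : ℕ} {M : AddSubgroup L} (hM : PrimSub p (b + 1) M) :
    PrimSub p b (pdiv p M) :=
  ⟨h.index_pdiv hM, fun hle => hM.2 ((le_pdiv p M).trans hle)⟩

lemma relIndex_pdiv {p : ℕ} (h : RkTwo L p)
    {b : ℕ} {M : AddSubgroup L} (hM : PrimSub p (b + 1) M) :
    M.relIndex (pdiv p M) = p := by
  have h1 := AddSubgroup.relIndex_mul_index (le_pdiv p M)
  rw [h.index_pdiv hM, hM.1, pow_succ'] at h1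
  exact Nat.eq_of_mul_eq_mul_right (pow_pos h.prime.pos b) h1

lemma exists_notMem {p : ℕ} (h : RkTwo L p)
    {b : ℕ} {M : AddSubgroup L} (hM : PrimSub p (b + 1) M) :
    ∃ x : L, p ^ b • x ∉ M := by
  induction b generalizing M with
  | zero =>
    by_contra! hall
    have : M = ⊤ := by
      rw [eq_top_iff]; intro x _; simpa using hall x
    have h3 := hM.1
    rw [this, AddSubgroup.index_top] at h3
    exact absurd h3 (Nat.one_lt_pow (by omega) h.prime.one_lt).ne
  | succ b ih =>
    obtain ⟨x, hx⟩ := ih (h.prim_pdiv hM)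
    refine ⟨x, ?_⟩
    rwa [mem_pdiv, ← mul_smul, ← pow_succ'] at hx

lemma mem_pdiv_iff {p : ℕ} (h : RkTwo L p)
    {b : ℕ} {M : AddSubgroup L} (hM : PrimSub p (b + 1) M) {x : L}
    (hx : x ∈ pdiv p M) : ∃ m ∈ M, ∃ y : L, x = m + p ^ b • y := by
  have hle : M ⊔ pmul (p ^ b) ⊤ ≤ pdiv p M := by
    refine sup_le (le_pdiv p M) ?_
    rintro _ ⟨y, -, rfl⟩
    rw [mem_pdiv, mulBy_apply, ← mul_smul, ← pow_succ', ← hM.1]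
    exact nsmul_index_mem M y
  have h1 := AddSubgroup.relIndex_mul_relIndex M (M ⊔ pmul (p ^ b) ⊤) (pdiv p M) le_sup_left hle
  rw [h.relIndex_pdiv hM] at h1
  have h2 : (M ⊔ pmul (p ^ b) ⊤).relIndex (pdiv p M) = 1 := by
    rcases (Nat.dvd_prime h.prime).mp ⟨_, h1.symm⟩ with h3 | h3
    · exfalso
      rw [AddSubgroup.relIndex_eq_one] at h3
      obtain ⟨y, hy⟩ := h.exists_notMem hM
      exact hy (h3 (AddSubgroup.mem_sup_right ⟨y, trivial, rfl⟩))
    · rw [h3] at h1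
      exact Nat.eq_of_mul_eq_mul_left h.prime.pos (by rw [h1, mul_one])
  have h4 := (AddSubgroup.relIndex_eq_one.mp h2) hx
  obtain ⟨m, hm, _, ⟨y, -, rfl⟩, rfl⟩ := AddSubgroup.mem_sup.mp h4
  exact ⟨m, hm, y, rfl⟩

lemma fibre {p : ℕ} (h : RkTwo L p)
    {b : ℕ} {M' : AddSubgroup L} (hM' : PrimSub p b M') (M : AddSubgroup L) :
    (PrimSub p (b + 1) M ∧ pdiv p M = M') ↔
      ((M ≤ M' ∧ M.relIndex M' = p) ∧ ¬ M ≤ pmul p ⊤) := by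
  constructor
  · rintro ⟨hM, rfl⟩
    exact ⟨⟨le_pdiv p M, h.relIndex_pdiv hM⟩, hM.2⟩
  · rintro ⟨⟨hle, hr⟩, hn⟩
    have h1 := AddSubgroup.relIndex_mul_index hle
    rw [hr, hM'.1, ← pow_succ'] at h1
    have hM : PrimSub p (b + 1) M := ⟨h1.symm, hn⟩
    refine ⟨hM, ?_⟩
    have h2 : M' ≤ pdiv p M := by
      intro x hx
      have := relIndex_nsmul_mem (M := M) hx
      rwa [hr] at this
    refine (eq_of_le_of_index h2 ?_ ?_).symm
    · rw [h.index_pdiv hM, hM'.1]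
    · rw [h.index_pdiv hM]; exact pow_ne_zero _ h.prime.ne_zero

lemma ncard_fibre_zero {p : ℕ} (h : RkTwo L p)
    {M' : AddSubgroup L} (hM' : PrimSub p 0 M') :
    {M : AddSubgroup L | PrimSub p 1 M ∧ pdiv p M = M'}.ncard = p + 1 := by
  have hi : M'.index ≠ 0 := by rw [hM'.1]; simp
  rw [← h.ncard_relIndex hi]
  congr 1
  ext M
  refine (h.fibre hM' M).trans ⟨fun h => h.1, fun h1 => ⟨h1, fun hle => ?_⟩⟩
  have h2 := AddSubgroup.relIndex_mul_index h1.1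
  rw [h1.2, hM'.1, pow_zero, mul_one] at h2
  have h3 := AddSubgroup.index_dvd_of_le hle
  rw [h.idx, ← h2] at h3
  have h4 := Nat.le_of_dvd h.prime.pos h3
  have h5 := h.prime.two_le
  nlinarith

lemma ncard_fibre_succ {p : ℕ} (h : RkTwo L p)
    {b : ℕ} {M' : AddSubgroup L} (hM' : PrimSub p (b + 1) M') :
    {M : AddSubgroup L | PrimSub p (b + 2) M ∧ pdiv p M = M'}.ncard = p := by
  have hi : M'.index ≠ 0 := by rw [hM'.1]; exact pow_ne_zero _ h.prime.ne_zero
  have hr : (M' ⊓ pmul p ⊤).relIndex M' = p := by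
    rw [AddSubgroup.inf_relIndex_left, ← AddSubgroup.relIndex_sup_right]
    have := AddSubgroup.relIndex_mul_index (le_sup_right : pmul p ⊤ ≤ M' ⊔ pmul p ⊤)
    rw [h.index_sup hM', h.idx, sq] at this
    exact Nat.eq_of_mul_eq_mul_right h.prime.pos this
  have hset : {M : AddSubgroup L | PrimSub p (b + 2) M ∧ pdiv p M = M'} =
      {N : AddSubgroup L | N ≤ M' ∧ N.relIndex M' = p} \ {M' ⊓ pmul p ⊤} := by
    ext M
    refine (h.fibre hM' M).trans ⟨?_, ?_⟩
    · rintro ⟨h1, h2⟩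
      refine ⟨h1, ?_⟩
      rintro rfl
      exact h2 inf_le_right
    · rintro ⟨h1, h2⟩
      refine ⟨h1, fun hle => h2 ?_⟩
      have h3 : M ≤ M' ⊓ pmul p ⊤ := le_inf h1.1 hle
      have h4 := AddSubgroup.relIndex_mul_index h1.1
      have h5 := AddSubgroup.relIndex_mul_index (inf_le_left : M' ⊓ pmul p ⊤ ≤ M')
      refine eq_of_le_of_index h3 ?_ ?_
      · rw [← h4, ← h5, hr, h1.2]
      · rw [← h5, hr]; exact mul_ne_zero h.prime.ne_zero hi
  have hmem : M' ⊓ pmul p ⊤ ∈ {N : AddSubgroup L | N ≤ M' ∧ N.relIndex M' = p} :=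
    ⟨inf_le_left, hr⟩
  rw [hset, Set.ncard_sdiff_singleton_of_mem hmem, h.ncard_relIndex hi]
  rfl

end RkTwo
end LatticeCount2


set_option linter.unusedSectionVars false
set_option linter.unusedVariables false

section LatticeCount3

variable {L : Type*} [AddCommGroup L]

/-- Counting a fibred set with constant fibre size. -/
lemma ncard_of_fibres {α β : Type*} {s : Set α} {t : Set β} (f : α → β) (hs : s.Finite)
    (ht : t.Finite) (hf : ∀ x ∈ s, f x ∈ t) (c : ℕ)
    (hc : ∀ y ∈ t, {x | x ∈ s ∧ f x = y}.ncard = c) : s.ncard = c * t.ncard := by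
  classical
  rw [Set.ncard_eq_toFinset_card s hs, Set.ncard_eq_toFinset_card t ht, mul_comm]
  rw [Finset.card_eq_sum_card_fiberwise (f := f) (t := ht.toFinset)]
  · apply Finset.sum_const_nat
    intro y hy
    rw [← hc y (ht.mem_toFinset.mp hy), ← Set.ncard_coe_finset]
    congr 1
    ext x
    simp
  · intro x hx
    simp only [Set.Finite.coe_toFinset] at hx ⊢
    exact hf x hx

/-- Abstract properties for the multiplicativity conditions `R a M`: `p^a M` defines a ring. -/
structure RingCond (L : Type*) [AddCommGroup L] (p : ℕ) (R : ℕ → AddSubgroup L → Prop) : Prop where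
  top : ∀ a, R a ⊤
  pmul : ∀ a M, R a (pmul p M) ↔ R (a + 1) M
  pdiv : ∀ a b M, PrimSub p (b + 1) M → (R (a + 1) M ↔ R a (pdiv p M))

/-- Number of subgroups of index `p^n` satisfying `R a`. -/
noncomputable def cntR (p : ℕ) (R : ℕ → AddSubgroup L → Prop) (a n : ℕ) : ℕ :=
  {M : AddSubgroup L | M.index = p ^ n ∧ R a M}.ncard

/-- Number of primitive subgroups of index `p^n` satisfying `R a`. -/
noncomputable def cntP (p : ℕ) (R : ℕ → AddSubgroup L → Prop) (a n : ℕ) : ℕ :=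
  {M : AddSubgroup L | PrimSub p n M ∧ R a M}.ncard

namespace RkTwo


lemma finite_P {p : ℕ} (h : RkTwo L p) {R : ℕ → AddSubgroup L → Prop} (hR : RingCond L p R)
    (a n : ℕ) : {M : AddSubgroup L | PrimSub p n M ∧ R a M}.Finite :=
  (h.finite_index n).subset fun _ hM => hM.1.1

lemma finite_R {p : ℕ} (h : RkTwo L p) {R : ℕ → AddSubgroup L → Prop} (hR : RingCond L p R)
    (a n : ℕ) : {M : AddSubgroup L | M.index = p ^ n ∧ R a M}.Finite :=
  (h.finite_index n).subset fun _ hM => hM.1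

lemma not_le_of_index {p : ℕ} (h : RkTwo L p) {R : ℕ → AddSubgroup L → Prop} (hR : RingCond L p R)
    {n : ℕ} (hn : n < 2) {M : AddSubgroup L} (hM : M.index = p ^ n) :
    ¬ M ≤ pmul p ⊤ := by
  intro hle
  have h3 := AddSubgroup.index_dvd_of_le hle
  rw [h.idx, hM, Nat.pow_dvd_pow_iff_le_right h.prime.one_lt] at h3
  omega

lemma cntR_of_lt {p : ℕ} (h : RkTwo L p) {R : ℕ → AddSubgroup L → Prop} (hR : RingCond L p R)
    {a n : ℕ} (hn : n < 2) : cntR p R a n = cntP p R a n := by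
  unfold cntR cntP
  congr 1
  ext M
  exact ⟨fun hM => ⟨⟨hM.1, h.not_le_of_index hR hn hM.1⟩, hM.2⟩, fun hM => ⟨hM.1.1, hM.2⟩⟩

lemma cntR_zero {p : ℕ} (h : RkTwo L p) {R : ℕ → AddSubgroup L → Prop} (hR : RingCond L p R)
    (a : ℕ) : cntR p R a 0 = 1 := by
  unfold cntR
  rw [Set.ncard_eq_one]
  refine ⟨⊤, ?_⟩
  ext M
  simp only [pow_zero, AddSubgroup.index_eq_one]
  constructor
  · rintro ⟨hM, -⟩; exact hM
  · rintro rfl; exact ⟨rfl, hR.top a⟩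

lemma cntR_add_two {p : ℕ} (h : RkTwo L p) {R : ℕ → AddSubgroup L → Prop} (hR : RingCond L p R)
    (a n : ℕ) : cntR p R a (n + 2) = cntP p R a (n + 2) + cntR p R (a + 1) n := by
  have hset : {M : AddSubgroup L | M.index = p ^ (n + 2) ∧ R a M} =
      {M : AddSubgroup L | PrimSub p (n + 2) M ∧ R a M} ∪
        (pmul p) '' {M : AddSubgroup L | M.index = p ^ n ∧ R (a + 1) M} := by
    ext M
    constructor
    · rintro ⟨h1, h2⟩
      by_cases hle : M ≤ pmul p ⊤
      · right
        have hM : pmul p (pdiv p M) = M := by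
          rw [pmul, pdiv, AddSubgroup.map_comap_eq, inf_eq_right, AddMonoidHom.range_eq_map]
          exact hle
        refine ⟨pdiv p M, ⟨?_, ?_⟩, hM⟩
        · have h3 := h.index_pmul (pdiv p M)
          rw [hM, h1, pow_add, mul_comm] at h3
          exact (Nat.eq_of_mul_eq_mul_left (pow_pos h.prime.pos 2) h3).symm
        · rw [← hR.pmul, hM]; exact h2
      · exact Or.inl ⟨⟨h1, hle⟩, h2⟩
    · rintro (h1 | ⟨N, ⟨h1, h2⟩, rfl⟩)
      · exact ⟨h1.1.1, h1.2⟩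
      · exact ⟨by rw [h.index_pmul, h1]; ring, (hR.pmul _ _).mpr h2⟩
  unfold cntR cntP
  rw [hset, Set.ncard_union_eq _ (h.finite_P hR _ _) ((h.finite_R hR _ _).image _),
    Set.ncard_image_of_injective _ h.pmul_injective]
  rw [Set.disjoint_left]
  rintro _ h1 ⟨N, -, rfl⟩
  exact h1.1.2 (AddSubgroup.map_mono le_top)

lemma cntP_zero {p : ℕ} (h : RkTwo L p) {R : ℕ → AddSubgroup L → Prop} (hR : RingCond L p R)
    (a : ℕ) : cntP p R a 0 = 1 := by
  rw [← h.cntR_of_lt hR (by norm_num), h.cntR_zero hR]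

lemma cntP_step {p : ℕ} (h : RkTwo L p) {R : ℕ → AddSubgroup L → Prop} (hR : RingCond L p R)
    {c a b : ℕ}
    (hc : ∀ M' : AddSubgroup L, PrimSub p b M' →
      {M : AddSubgroup L | PrimSub p (b + 1) M ∧ pdiv p M = M'}.ncard = c) :
    cntP p R (a + 1) (b + 1) = c * cntP p R a b := by
  refine ncard_of_fibres (pdiv p) (h.finite_P hR _ _) (h.finite_P hR _ _) ?_ c ?_
  · rintro M ⟨h1, h2⟩
    exact ⟨h.prim_pdiv h1, (hR.pdiv _ _ _ h1).mp h2⟩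
  · rintro M' ⟨h1, h2⟩
    rw [← hc M' h1]
    congr 1
    ext M
    constructor
    · rintro ⟨⟨h3, -⟩, h4⟩; exact ⟨h3, h4⟩
    · rintro ⟨h3, rfl⟩; exact ⟨⟨h3, (hR.pdiv _ _ _ h3).mpr h2⟩, rfl⟩

lemma cntP_one {p : ℕ} (h : RkTwo L p) {R : ℕ → AddSubgroup L → Prop} (hR : RingCond L p R)
    (a : ℕ) : cntP p R (a + 1) 1 = p + 1 := by
  rw [h.cntP_step hR (b := 0) (fun M' hM' => h.ncard_fibre_zero hM'), h.cntP_zero hR, mul_one]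

lemma cntP_succ {p : ℕ} (h : RkTwo L p) {R : ℕ → AddSubgroup L → Prop} (hR : RingCond L p R)
    (a b : ℕ) : cntP p R (a + 1) (b + 2) = p * cntP p R a (b + 1) :=
  h.cntP_step hR (b := b + 1) (fun M' hM' => h.ncard_fibre_succ hM')

lemma cntR_succ {p : ℕ} (h : RkTwo L p) {R : ℕ → AddSubgroup L → Prop} (hR : RingCond L p R)
    (n : ℕ) : ∀ a, cntR p R (a + 1) (n + 1) = p * cntR p R a n + 1 := by
  induction n using Nat.strong_induction_on with
  | _ n ih =>
    intro a
    match n with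
    | 0 => rw [h.cntR_of_lt hR (by norm_num), h.cntP_one hR, h.cntR_zero hR, mul_one]
    | 1 =>
      rw [h.cntR_add_two hR, h.cntR_zero hR, h.cntP_succ hR, h.cntR_of_lt hR (by norm_num)]
    | n + 2 =>
      rw [show n + 2 + 1 = n + 1 + 2 from rfl, h.cntR_add_two hR, h.cntP_succ hR,
        ih n (by omega), h.cntR_add_two hR]
      ring

/-- The fundamental recursion. -/
lemma cntR_rec {p : ℕ} (h : RkTwo L p) {R : ℕ → AddSubgroup L → Prop} (hR : RingCond L p R)
    (n : ℕ) :
    cntR p R 0 (n + 3) = p * cntR p R 0 n + cntP p R 0 (n + 3) + 1 := by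
  rw [show n + 3 = n + 1 + 2 from rfl, h.cntR_add_two hR, h.cntR_succ hR]; ring

lemma cntR_one' {p : ℕ} (h : RkTwo L p) {R : ℕ → AddSubgroup L → Prop} (hR : RingCond L p R)
    : cntR p R 0 1 = cntP p R 0 1 := h.cntR_of_lt hR (by norm_num)

lemma cntR_two' {p : ℕ} (h : RkTwo L p) {R : ℕ → AddSubgroup L → Prop} (hR : RingCond L p R)
    : cntR p R 0 2 = cntP p R 0 2 + 1 := by
  rw [h.cntR_add_two hR 0 0, h.cntR_zero hR]

end RkTwo
end LatticeCount3


set_option linter.unusedSectionVars false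
set_option linter.unusedVariables false

section RingPart

/-- `A / ℤ`. -/
abbrev ModZ (A : Type*) [CommRing A] : Type _ := A ⧸ AddSubgroup.zmultiples (1 : A)

variable {A : Type*} [CommRing A]

/-- The projection `A → A / ℤ`. -/
abbrev toModZ (A : Type*) [CommRing A] : A →+ ModZ A :=
  QuotientAddGroup.mk' (AddSubgroup.zmultiples (1 : A))

lemma toModZ_surj : Function.Surjective (toModZ A) := QuotientAddGroup.mk'_surjective _

lemma toModZ_eq_zero {x : A} : toModZ A x = 0 ↔ ∃ n : ℤ, (n : A) = x := by
  rw [QuotientAddGroup.mk'_apply, QuotientAddGroup.eq_zero_iff, AddSubgroup.mem_zmultiples_iff]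
  simp

lemma toModZ_int (n : ℤ) : toModZ A (n : A) = 0 := toModZ_eq_zero.mpr ⟨n, rfl⟩

lemma toModZ_eq {x y : A} : toModZ A x = toModZ A y ↔ ∃ n : ℤ, x = y + n := by
  rw [← sub_eq_zero, ← map_sub, toModZ_eq_zero]
  constructor
  · rintro ⟨n, hn⟩; exact ⟨n, by rw [hn]; ring⟩
  · rintro ⟨n, hn⟩; exact ⟨n, by rw [hn]; ring⟩

/-- The multiplicativity condition. -/
def RC (A : Type*) [CommRing A] (p a : ℕ) (M : AddSubgroup (ModZ A)) : Prop :=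
  ∀ x y : A, toModZ A x ∈ M → toModZ A y ∈ M → toModZ A ((p : A) ^ a * (x * y)) ∈ M

lemma toModZ_nat_mul (n : ℕ) (x : A) : toModZ A ((n : A) * x) = n • toModZ A x := by
  rw [← nsmul_eq_mul, map_nsmul]

lemma toModZ_int_mul (n : ℤ) (x : A) : toModZ A ((n : A) * x) = n • toModZ A x := by
  rw [← zsmul_eq_mul, map_zsmul]

lemma ringCond {p : ℕ} (h : RkTwo (ModZ A) p) : RingCond (ModZ A) p (RC A p) where
  top := fun a x y _ _ => trivial
  pmul := by
    intro a M
    constructor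
    · intro hM x y hx hy
      have h1 := hM (p * x) (p * y) ⟨_, hx, by rw [toModZ_nat_mul, mulBy_apply]⟩
        ⟨_, hy, by rw [toModZ_nat_mul, mulBy_apply]⟩
      obtain ⟨z, hz, hz'⟩ := h1
      have : (p : A) ^ a * (p * x * (p * y)) = p * ((p : A) ^ (a + 1) * (x * y)) := by ring
      rw [this, toModZ_nat_mul] at hz'
      have := h.inj hz'
      rw [← this]; exact hz
    · rintro hM x y ⟨x', hx', hx⟩ ⟨y', hy', hy⟩
      obtain ⟨x', rfl⟩ := toModZ_surj x'
      obtain ⟨y', rfl⟩ := toModZ_surj y'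
      rw [mulBy_apply, ← toModZ_nat_mul, eq_comm, toModZ_eq] at hx hy
      obtain ⟨m, rfl⟩ := hx
      obtain ⟨n, rfl⟩ := hy
      have : (p : A) ^ a * ((p * x' + m) * (p * y' + n)) =
          p * ((p : A) ^ (a + 1) * (x' * y') + ((p ^ a * n : ℤ) : A) * x'
            + ((p ^ a * m : ℤ) : A) * y') + ((p ^ a * m * n : ℤ) : A) := by
        push_cast; ring
      rw [this, map_add, toModZ_int, add_zero, toModZ_nat_mul]
      refine ⟨_, ?_, rfl⟩
      rw [map_add, map_add, toModZ_int_mul, toModZ_int_mul]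
      exact M.add_mem (M.add_mem (hM _ _ hx' hy') (M.zsmul_mem hx' _)) (M.zsmul_mem hy' _)
  pdiv := by
    intro a b M hM
    constructor
    · intro hR x y hx hy
      obtain ⟨m, hm, u, hu⟩ := h.mem_pdiv_iff hM hx
      obtain ⟨n, hn, v, hv⟩ := h.mem_pdiv_iff hM hy
      obtain ⟨m, rfl⟩ := toModZ_surj m
      obtain ⟨n, rfl⟩ := toModZ_surj n
      obtain ⟨u, rfl⟩ := toModZ_surj u
      obtain ⟨v, rfl⟩ := toModZ_surj v
      rw [← toModZ_nat_mul, ← map_add, toModZ_eq] at hu hv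
      obtain ⟨k, hk⟩ := hu
      obtain ⟨l, hl⟩ := hv
      -- absorb the integers
      have hm' : toModZ A (m + k) ∈ M := by rwa [map_add, toModZ_int, add_zero]
      have hn' : toModZ A (n + l) ∈ M := by rwa [map_add, toModZ_int, add_zero]
      rw [mem_pdiv, ← toModZ_nat_mul]
      have e : (p : A) * ((p : A) ^ a * (x * y)) =
          (p : A) ^ (a + 1) * ((m + k) * (n + l)) +
          ((p ^ (b + 1) : ℕ) : A) * ((p : A) ^ a * (u * (n + l) + v * (m + k) + p ^ b * (u * v))) := by
        rw [hk, hl]; push_cast; ring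
      rw [e, map_add, toModZ_nat_mul, ← hM.1]
      exact M.add_mem (hR _ _ hm' hn') (nsmul_index_mem M _)
    · intro hR x y hx hy
      have := hR x y (RkTwo.le_pdiv p M hx) (RkTwo.le_pdiv p M hy)
      rw [mem_pdiv, ← toModZ_nat_mul] at this
      convert this using 2
      ring

/-- The additive subgroup of `A / ℤ` associated with a subring. -/
def subMod (S : Subring A) : AddSubgroup (ModZ A) := S.toAddSubgroup.map (toModZ A)

lemma mem_subMod {S : Subring A} {x : A} : toModZ A x ∈ subMod S ↔ x ∈ S := by
  constructor
  · rintro ⟨y, hy, hyx⟩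
    obtain ⟨n, rfl⟩ := toModZ_eq.mp hyx.symm
    exact S.add_mem hy (intCast_mem S n)
  · intro hx; exact ⟨x, hx, rfl⟩

lemma index_subMod (S : Subring A) : (subMod S).index = S.toAddSubgroup.index := by
  refine AddSubgroup.index_map_eq _ toModZ_surj ?_
  intro x hx
  obtain ⟨n, rfl⟩ := toModZ_eq_zero.mp hx
  exact intCast_mem S n

lemma RC_subMod (S : Subring A) (p : ℕ) : RC A p 0 (subMod S) := by
  intro x y hx hy
  rw [mem_subMod] at *
  rw [pow_zero, one_mul]
  exact S.mul_mem hx hy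

lemma subMod_injective : Function.Injective (subMod : Subring A → _) := by
  intro S T hST
  ext x
  rw [← mem_subMod, hST, mem_subMod]

lemma exists_subMod {p : ℕ} {M : AddSubgroup (ModZ A)} (hM : RC A p 0 M) :
    ∃ S : Subring A, subMod S = M := by
  refine ⟨{ M.comap (toModZ A) with
    mul_mem' := ?_
    one_mem' := ?_ }, ?_⟩
  · intro x y hx hy
    have := hM x y hx hy
    rw [pow_zero, one_mul] at this
    exact this
  · change toModZ A 1 ∈ M
    have := toModZ_int (A := A) 1
    rw [Int.cast_one] at this
    rw [this]; exact M.zero_mem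
  · ext z
    obtain ⟨x, rfl⟩ := toModZ_surj z
    rw [mem_subMod]
    rfl

lemma card_subring (p n : ℕ) :
    Nat.card {S : Subring A // S.toAddSubgroup.index = p ^ n} = cntR p (RC A p) 0 n := by
  rw [cntR, ← Nat.card_coe_set_eq]
  refine Nat.card_congr (Equiv.ofBijective
    (fun S => ⟨subMod S.1, (index_subMod _).trans S.2, RC_subMod _ _⟩) ⟨?_, ?_⟩)
  · intro S T h
    exact Subtype.ext (subMod_injective (congrArg Subtype.val h))
  · rintro ⟨M, h1, h2⟩
    obtain ⟨S, rfl⟩ := exists_subMod h2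
    exact ⟨⟨S, (index_subMod S).symm.trans h1⟩, rfl⟩

end RingPart


set_option linter.unusedSectionVars false
set_option linter.unusedVariables false

section IndexLemmas

lemma relIndex_sup_zmultiples {G : Type*} [AddCommGroup G] {p k : ℕ} (hp : p.Prime)
    (H : AddSubgroup G) (x : G) (h1 : p ^ k • x ∉ H) (h2 : p ^ (k + 1) • x ∈ H) :
    H.relIndex (H ⊔ AddSubgroup.zmultiples x) = p ^ (k + 1) := by
  have := Fact.mk hp
  rw [AddSubgroup.relIndex_sup_left]
  have h3 := AddSubgroup.relIndex_ker (AddSubgroup.zmultiples x) (QuotientAddGroup.mk' H)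
  rw [QuotientAddGroup.ker_mk', AddMonoidHom.map_zmultiples, Nat.card_zmultiples] at h3
  rw [h3]
  apply addOrderOf_eq_prime_pow
  · rw [← map_nsmul, QuotientAddGroup.mk'_apply, QuotientAddGroup.eq_zero_iff]; exact h1
  · rw [← map_nsmul, QuotientAddGroup.mk'_apply, QuotientAddGroup.eq_zero_iff]; exact h2

lemma index_sup_zmultiples {G : Type*} [AddCommGroup G] {p k : ℕ} (hp : p.Prime)
    (H : AddSubgroup G) (x : G) (h1 : p ^ k • x ∉ H) (h2 : p ^ (k + 1) • x ∈ H) :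
    p ^ (k + 1) * (H ⊔ AddSubgroup.zmultiples x).index = H.index := by
  rw [← relIndex_sup_zmultiples hp H x h1 h2]
  exact AddSubgroup.relIndex_mul_index le_sup_left

variable {A : Type*} [CommRing A]

lemma index_map_toModZ {p k : ℕ} (hp : p.Prime) (H : AddSubgroup A)
    (h1 : (p : A) ^ k ∉ H) (h2 : (p : A) ^ (k + 1) ∈ H) :
    p ^ (k + 1) * (H.map (toModZ A)).index = H.index := by
  have hr : (toModZ A).range = ⊤ := AddMonoidHom.range_eq_top.mpr toModZ_surj
  rw [← index_sup_zmultiples hp H 1 (by simpa using h1) (by simpa using h2), AddSubgroup.index_map,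
    QuotientAddGroup.ker_mk', hr, AddSubgroup.index_top,
    mul_one]

lemma map_toModZ_pmul (p : ℕ) : (pmul p (⊤ : AddSubgroup A)).map (toModZ A) = pmul p ⊤ := by
  ext z
  constructor
  · rintro ⟨_, ⟨y, -, rfl⟩, rfl⟩
    exact ⟨toModZ A y, trivial, by rw [mulBy_apply, mulBy_apply, map_nsmul]⟩
  · rintro ⟨y, -, rfl⟩
    obtain ⟨y, rfl⟩ := toModZ_surj y
    exact ⟨p • y, ⟨y, trivial, rfl⟩, by rw [mulBy_apply, map_nsmul]⟩

lemma pmul_eq_span (p : ℕ) :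
    pmul p (⊤ : AddSubgroup A) = (Ideal.span {(p : A)}).toAddSubgroup := by
  ext x
  rw [mem_pmul]
  change _ ↔ x ∈ Ideal.span {(p : A)}
  rw [Ideal.mem_span_singleton']
  constructor
  · rintro ⟨y, -, rfl⟩; exact ⟨y, by rw [nsmul_eq_mul, mul_comm]⟩
  · rintro ⟨y, rfl⟩; exact ⟨y, trivial, by rw [nsmul_eq_mul, mul_comm]⟩

end IndexLemmas

section NF
open scoped NumberField

variable {K : Type} [Field K] [NumberField K]

lemma absNorm_eq_index (I : Ideal (𝓞 K)) : Ideal.absNorm I = I.toAddSubgroup.index := rfl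

lemma absNorm_span_nat (hdeg : Module.finrank ℚ K = 3) (p : ℕ) :
    Ideal.absNorm (Ideal.span {(p : 𝓞 K)}) = p ^ 3 := by
  rw [Ideal.absNorm_span_singleton]
  have : (p : 𝓞 K) = algebraMap ℤ (𝓞 K) p := by simp
  rw [this, Algebra.norm_algebraMap, NumberField.RingOfIntegers.rank, hdeg]
  simp [Int.natAbs_pow]

lemma nat_dvd_one {p : ℕ} (hdeg : Module.finrank ℚ K = 3) (hp : p.Prime) :
    (1 : 𝓞 K) ∉ Ideal.span {(p : 𝓞 K)} := by
  intro h
  have h1 := absNorm_span_nat hdeg p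
  rw [(Ideal.eq_top_iff_one _).mpr h, Ideal.absNorm_top] at h1
  exact absurd h1 (Nat.one_lt_pow (by omega) hp.one_lt).ne

lemma rkTwo (hdeg : Module.finrank ℚ K = 3) {p : ℕ} (hp : p.Prime) : RkTwo (ModZ (𝓞 K)) p where
  prime := hp
  inj := by
    rw [injective_iff_map_eq_zero]
    intro z hz
    obtain ⟨x, rfl⟩ := toModZ_surj z
    rw [mulBy_apply, ← toModZ_nat_mul, toModZ_eq_zero] at hz
    obtain ⟨n, hn⟩ := hz
    have h1 := congrArg (Algebra.norm ℤ) hn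
    have e1 : (n : 𝓞 K) = algebraMap ℤ (𝓞 K) n := by simp
    have e2 : (p : 𝓞 K) = algebraMap ℤ (𝓞 K) p := by simp
    rw [map_mul, e1, e2, Algebra.norm_algebraMap, Algebra.norm_algebraMap,
      NumberField.RingOfIntegers.rank, hdeg] at h1
    have h2 : (p : ℤ) ∣ n := by
      rw [← Int.pow_dvd_pow_iff (n := 3) (by norm_num)]
      exact ⟨_, h1⟩
    obtain ⟨m, rfl⟩ := h2
    rw [toModZ_eq_zero]
    refine ⟨m, ?_⟩
    have hp0 : (p : 𝓞 K) ≠ 0 := by exact_mod_cast hp.ne_zero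
    apply mul_left_cancel₀ hp0
    rw [← hn]; push_cast; rfl
  idx := by
    rw [← map_toModZ_pmul, pmul_eq_span]
    have h1 := index_map_toModZ (k := 0) hp (Ideal.span {(p : 𝓞 K)}).toAddSubgroup
      (by rw [pow_zero]; exact nat_dvd_one hdeg hp)
      (by rw [zero_add, pow_one]; exact Ideal.mem_span_singleton_self _)
    rw [← absNorm_eq_index, absNorm_span_nat hdeg, zero_add, pow_one, pow_succ'] at h1
    exact Nat.eq_of_mul_eq_mul_left hp.pos h1

/-- The conductor of a subring. -/
def condIdeal {A : Type*} [CommRing A] (S : Subring A) : Ideal A where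
  carrier := {x | ∀ y, x * y ∈ S}
  add_mem' := fun {a b} ha hb y => by rw [add_mul]; exact S.add_mem (ha y) (hb y)
  zero_mem' := fun y => by rw [zero_mul]; exact S.zero_mem
  smul_mem' := fun c x hx y => by
    have := hx (c * y)
    rw [smul_eq_mul]
    convert this using 1
    ring

/-- The ideals corresponding to primitive subrings. -/
def CSet (K : Type) [Field K] [NumberField K] (p k : ℕ) : Set (Ideal (𝓞 K)) :=
  {C | (p : 𝓞 K) ^ (k + 1) ∈ C ∧ Ideal.absNorm C = p ^ (2 * (k + 1)) ∧
    ¬ C ≤ Ideal.span {(p : 𝓞 K)}}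

/-- The ideals with cyclic quotient of order `p^(k+1)`. -/
def ISet (K : Type) [Field K] [NumberField K] (p k : ℕ) : Set (Ideal (𝓞 K)) :=
  {I | Ideal.absNorm I = p ^ (k + 1) ∧ (p : 𝓞 K) ^ k ∉ I}

lemma condIdeal_spec (hdeg : Module.finrank ℚ K = 3) {p : ℕ} (hp : p.Prime) {k : ℕ}
    (S : Subring (𝓞 K)) (hS : PrimSub p (k + 1) (subMod S)) :
    condIdeal S ∈ CSet K p k ∧ (condIdeal S).toAddSubgroup.map (toModZ (𝓞 K)) = subMod S := by
  have h := rkTwo (K := K) hdeg hp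
  obtain ⟨z, hz⟩ := h.exists_notMem hS
  obtain ⟨β, rfl⟩ := toModZ_surj z
  have hle : ∀ x ∈ condIdeal S, x ∈ S := fun x hx => by simpa using hx 1
  have hidx := hS.1
  rw [index_subMod] at hidx
  have hpow : ∀ x : 𝓞 K, (p : 𝓞 K) ^ (k + 1) * x ∈ S := by
    intro x
    have := nsmul_index_mem S.toAddSubgroup x
    rw [hidx, nsmul_eq_mul, Nat.cast_pow] at this
    exact this
  have hβ : (p : 𝓞 K) ^ k * β ∉ S := by
    rw [← mem_subMod, ← Nat.cast_pow, toModZ_nat_mul]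
    exact hz
  have hgen : ∀ x : 𝓞 K, ∃ n : ℤ, x - n * β ∈ S := by
    have h1 := index_sup_zmultiples hp S.toAddSubgroup β (k := k)
      (by rw [nsmul_eq_mul, Nat.cast_pow]; exact hβ)
      (by rw [nsmul_eq_mul, Nat.cast_pow]; exact hpow β)
    rw [hidx] at h1
    have h2 : (S.toAddSubgroup ⊔ AddSubgroup.zmultiples β).index = 1 :=
      Nat.eq_of_mul_eq_mul_left (pow_pos hp.pos (k + 1)) (by rw [h1, mul_one])
    rw [AddSubgroup.index_eq_one] at h2
    intro x
    have hx : x ∈ S.toAddSubgroup ⊔ AddSubgroup.zmultiples β := by rw [h2]; trivial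
    obtain ⟨s, hs, t, ht, rfl⟩ := AddSubgroup.mem_sup.mp hx
    obtain ⟨n, rfl⟩ := AddSubgroup.mem_zmultiples_iff.mp ht
    refine ⟨n, ?_⟩
    rw [zsmul_eq_mul, add_sub_cancel_right]
    exact hs
  have hsub : ∀ t ∈ S, ∃ n : ℤ, t - n ∈ condIdeal S := by
    intro t ht
    obtain ⟨n, hn⟩ := hgen (t * β)
    refine ⟨n, fun y => ?_⟩
    obtain ⟨m, hm⟩ := hgen y
    have e : (t - n) * y = (t - n) * (y - m * β) + m * (t * β - n * β) := by ring
    rw [e]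
    exact S.add_mem (S.mul_mem (S.sub_mem ht (intCast_mem S n)) hm)
      (S.mul_mem (intCast_mem S m) hn)
  have hmap : (condIdeal S).toAddSubgroup.map (toModZ (𝓞 K)) = subMod S := by
    apply le_antisymm
    · rintro _ ⟨x, hx, rfl⟩
      exact mem_subMod.mpr (hle x hx)
    · rintro _ ⟨t, ht, rfl⟩
      obtain ⟨n, hn⟩ := hsub t ht
      refine ⟨_, hn, ?_⟩
      rw [map_sub, toModZ_int, sub_zero]
  refine ⟨⟨hpow, ?_, ?_⟩, hmap⟩
  · rw [absNorm_eq_index, ← index_map_toModZ (k := k) hp (condIdeal S).toAddSubgroup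
      (fun hc : (p : 𝓞 K) ^ k ∈ condIdeal S => hβ (hc β)) hpow, hmap, hS.1]
    ring
  · intro hle'
    apply hS.2
    rw [← hmap, ← map_toModZ_pmul, pmul_eq_span]
    exact AddSubgroup.map_mono hle'

lemma cofactor_mem {p : ℕ} (hp : p.Prime) {k : ℕ} {C I : Ideal (𝓞 K)}
    (hCI : C * I = Ideal.span {(p : 𝓞 K) ^ (k + 1)}) :
    (p : 𝓞 K) ^ k ∈ I ↔ C ≤ Ideal.span {(p : 𝓞 K)} := by
  have hp0 : (p : 𝓞 K) ≠ 0 := by exact_mod_cast hp.ne_zero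
  have hne : C * I ≠ 0 := by
    rw [hCI, Ideal.zero_eq_bot, Ne, Ideal.span_singleton_eq_bot]; exact pow_ne_zero _ hp0
  have hC : C ≠ 0 := left_ne_zero_of_mul hne
  have hpk : Ideal.span {(p : 𝓞 K) ^ k} ≠ 0 := by
    rw [Ideal.zero_eq_bot, Ne, Ideal.span_singleton_eq_bot]; exact pow_ne_zero _ hp0
  rw [← Ideal.span_singleton_le_iff_mem, ← Ideal.dvd_iff_le, ← Ideal.dvd_iff_le,
    ← mul_dvd_mul_iff_left hC, hCI, pow_succ, ← Ideal.span_singleton_mul_span_singleton, mul_comm C,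
    mul_dvd_mul_iff_left hpk]

lemma cofactor_norm (hdeg : Module.finrank ℚ K = 3) {p : ℕ} {k : ℕ} {C I : Ideal (𝓞 K)}
    (hCI : C * I = Ideal.span {(p : 𝓞 K) ^ (k + 1)}) :
    Ideal.absNorm C * Ideal.absNorm I = p ^ (k + 1) * p ^ (2 * (k + 1)) := by
  rw [← map_mul, hCI, ← Nat.cast_pow, absNorm_span_nat hdeg]
  ring

lemma CSet_spec (hdeg : Module.finrank ℚ K = 3) {p : ℕ} (hp : p.Prime) {k : ℕ}
    {C : Ideal (𝓞 K)} (hC : C ∈ CSet K p k) :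
    PrimSub p (k + 1) (C.toAddSubgroup.map (toModZ (𝓞 K))) := by
  have h := rkTwo (K := K) hdeg hp
  obtain ⟨h1, h2, h3⟩ := hC
  have hdvd : C ∣ Ideal.span {(p : 𝓞 K) ^ (k + 1)} := by
    rw [Ideal.dvd_iff_le, Ideal.span_singleton_le_iff_mem]; exact h1
  obtain ⟨I, hI⟩ := hdvd
  have hCI := hI.symm
  have hpI : (p : 𝓞 K) ^ k ∉ I := fun hc => h3 ((cofactor_mem hp hCI).mp hc)
  have hnI : Ideal.absNorm I = p ^ (k + 1) := by
    have := cofactor_norm hdeg hCI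
    rw [h2, mul_comm] at this
    exact Nat.eq_of_mul_eq_mul_right (pow_pos hp.pos _) this
  have hpI' : (p : 𝓞 K) ^ (k + 1) ∈ I := by
    have := Ideal.absNorm_mem I
    rwa [hnI, Nat.cast_pow] at this
  have hpC : (p : 𝓞 K) ^ k ∉ C := by
    intro hc
    have hIp : I ≤ Ideal.span {(p : 𝓞 K)} := (cofactor_mem hp (by rw [mul_comm]; exact hCI)).mp hc
    have h4 := index_map_toModZ (k := k) hp I.toAddSubgroup hpI hpI'
    rw [← absNorm_eq_index, hnI] at h4
    have h5 : (I.toAddSubgroup.map (toModZ (𝓞 K))).index = p ^ 0 :=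
      Nat.eq_of_mul_eq_mul_left (pow_pos hp.pos (k + 1)) (by rw [h4, pow_zero, mul_one])
    refine h.not_le_of_index (ringCond h) (by norm_num) h5 ?_
    rw [← map_toModZ_pmul, pmul_eq_span]
    exact AddSubgroup.map_mono hIp
  refine ⟨?_, ?_⟩
  · have h4 := index_map_toModZ (k := k) hp C.toAddSubgroup hpC h1
    rw [← absNorm_eq_index, h2, show p ^ (2 * (k + 1)) = p ^ (k + 1) * p ^ (k + 1) by ring] at h4
    exact Nat.eq_of_mul_eq_mul_left (pow_pos hp.pos (k + 1)) h4
  · intro hle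
    obtain ⟨c, hc, hcp⟩ := Set.not_subset.mp h3
    obtain ⟨z, -, hz⟩ := hle ⟨c, hc, rfl⟩
    obtain ⟨o, rfl⟩ := toModZ_surj z
    rw [mulBy_apply, ← toModZ_nat_mul, eq_comm, toModZ_eq] at hz
    obtain ⟨n, hn⟩ := hz
    have hnp : ¬ (p : ℤ) ∣ n := by
      rintro ⟨m, rfl⟩
      apply hcp
      change c ∈ Ideal.span {(p : 𝓞 K)}
      rw [Ideal.mem_span_singleton]
      exact ⟨o + m, by rw [hn]; push_cast; ring⟩
    have hco : IsCoprime (p : ℤ) n :=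
      (Prime.coprime_iff_not_dvd (Nat.prime_iff_prime_int.mp hp)).mpr hnp
    obtain ⟨u, v, huv⟩ := hco
    have hcop : IsCoprime C (Ideal.span {(p : 𝓞 K)}) := by
      rw [Ideal.isCoprime_iff_exists]
      refine ⟨v * c, C.mul_mem_left _ hc, p * (u - v * o), ?_, ?_⟩
      · exact Ideal.mul_mem_right _ _ (Ideal.mem_span_singleton_self _)
      · have : ((u * p + v * n : ℤ) : 𝓞 K) = 1 := by rw [huv]; simp
        push_cast at this
        rw [hn, ← this]; ring
    have hcop2 := hcop.pow_right (n := k + 1)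
    rw [Ideal.span_singleton_pow, Ideal.isCoprime_iff_sup_eq,
      sup_eq_left.mpr ((Ideal.span_singleton_le_iff_mem _).mpr h1)] at hcop2
    rw [hcop2, Ideal.absNorm_top] at h2
    exact absurd h2 (Nat.one_lt_pow (by omega) hp.one_lt).ne

lemma RC_ideal {A : Type*} [CommRing A] (C : Ideal A) (p : ℕ) :
    RC A p 0 (C.toAddSubgroup.map (toModZ A)) := by
  rintro x y ⟨c, hc, hcx⟩ ⟨d, hd, hdy⟩
  obtain ⟨m, rfl⟩ := toModZ_eq.mp hcx.symm
  obtain ⟨n, rfl⟩ := toModZ_eq.mp hdy.symm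
  refine ⟨c * d + n * c + m * d, ?_, ?_⟩
  · exact C.add_mem (C.add_mem (C.mul_mem_left _ hd) (C.mul_mem_left _ hc)) (C.mul_mem_left _ hd)
  · rw [eq_comm, toModZ_eq]
    exact ⟨m * n, by push_cast; ring⟩

lemma cntP_eq_CSet (hdeg : Module.finrank ℚ K = 3) {p : ℕ} (hp : p.Prime) (k : ℕ) :
    cntP p (RC (𝓞 K) p) 0 (k + 1) = (CSet K p k).ncard := by
  symm
  refine Set.ncard_congr (fun C _ => C.toAddSubgroup.map (toModZ (𝓞 K))) ?_ ?_ ?_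
  · intro C hC
    exact ⟨CSet_spec hdeg hp hC, RC_ideal C p⟩
  · intro C D hC hD hCD
    obtain ⟨S, hS⟩ := exists_subMod (RC_ideal C p)
    have key : ∀ E ∈ CSet K p k, E.toAddSubgroup.map (toModZ (𝓞 K)) = subMod S →
        E = condIdeal S := by
      intro E hE hES
      have hprim := CSet_spec hdeg hp hE
      rw [hES] at hprim
      have hc := (condIdeal_spec hdeg hp S hprim).1
      have hle : E ≤ condIdeal S := by
        intro x hx y
        rw [← mem_subMod, ← hES]
        exact ⟨_, E.mul_mem_right y hx, rfl⟩
      have := RkTwo.eq_of_le_of_index (M := E.toAddSubgroup) (N := (condIdeal S).toAddSubgroup) hle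
        (by rw [← absNorm_eq_index, ← absNorm_eq_index, hE.2.1, hc.2.1])
        (by rw [← absNorm_eq_index, hc.2.1]; exact pow_ne_zero _ hp.ne_zero)
      exact Submodule.toAddSubgroup_injective this
    rw [key C hC hS.symm, key D hD (by rw [← hCD, hS])]
  · rintro M ⟨h1, h2⟩
    obtain ⟨S, rfl⟩ := exists_subMod h2
    obtain ⟨h3, h4⟩ := condIdeal_spec hdeg hp S h1
    exact ⟨_, h3, h4⟩

lemma CSet_eq_ISet (hdeg : Module.finrank ℚ K = 3) {p : ℕ} (hp : p.Prime) (k : ℕ) :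
    (CSet K p k).ncard = (ISet K p k).ncard := by
  have hp0 : (p : 𝓞 K) ≠ 0 := by exact_mod_cast hp.ne_zero
  have hne : Ideal.span {(p : 𝓞 K) ^ (k + 1)} ≠ 0 := by
    rw [Ideal.zero_eq_bot, Ne, Ideal.span_singleton_eq_bot]; exact pow_ne_zero _ hp0
  have hex : ∀ C ∈ CSet K p k, C ∣ Ideal.span {(p : 𝓞 K) ^ (k + 1)} := by
    intro C hC
    rw [Ideal.dvd_iff_le, Ideal.span_singleton_le_iff_mem]; exact hC.1
  choose! f hf using hex
  refine Set.ncard_congr (fun C _ => f C) ?_ ?_ ?_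
  · intro C hC
    have hCI := (hf C hC).symm
    refine ⟨?_, fun hc => hC.2.2 ((cofactor_mem hp hCI).mp hc)⟩
    have := cofactor_norm hdeg hCI
    rw [hC.2.1, mul_comm] at this
    exact Nat.eq_of_mul_eq_mul_right (pow_pos hp.pos _) this
  · intro C D hC hD hCD
    have h1 := hf C hC
    have h2 := hf D hD
    rw [h1, hCD] at h2
    refine mul_right_cancel₀ (b := f D) ?_ h2
    have := hf D hD
    rw [this] at hne
    exact right_ne_zero_of_mul hne
  · rintro I ⟨h1, h2⟩
    have hdvd : I ∣ Ideal.span {(p : 𝓞 K) ^ (k + 1)} := by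
      rw [Ideal.dvd_iff_le, Ideal.span_singleton_le_iff_mem]
      have := Ideal.absNorm_mem I
      rwa [h1, Nat.cast_pow] at this
    obtain ⟨C, hC⟩ := hdvd
    have hCI : C * I = Ideal.span {(p : 𝓞 K) ^ (k + 1)} := by rw [mul_comm]; exact hC.symm
    have hCm : C ∈ CSet K p k := by
      refine ⟨?_, ?_, fun hc => h2 ((cofactor_mem hp hCI).mpr hc)⟩
      · rw [← Ideal.span_singleton_le_iff_mem, ← hCI]; exact Ideal.mul_le_left
      · have := cofactor_norm hdeg hCI
        rw [h1, mul_comm] at this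
        exact Nat.eq_of_mul_eq_mul_left (pow_pos hp.pos _) this
    refine ⟨C, hCm, ?_⟩
    have h3 := hf C hCm
    rw [← hCI] at h3
    refine (mul_left_cancel₀ ?_ h3).symm
    rw [← hCI] at hne
    exact left_ne_zero_of_mul hne

lemma cntP_eq_ISet (hdeg : Module.finrank ℚ K = 3) {p : ℕ} (hp : p.Prime) (k : ℕ) :
    cntP p (RC (𝓞 K) p) 0 (k + 1) = (ISet K p k).ncard := by
  rw [cntP_eq_CSet hdeg hp, CSet_eq_ISet hdeg hp]

end NF


set_option linter.unusedSectionVars false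
set_option linter.unusedVariables false
set_option linter.unusedSimpArgs false

section Combi

lemma multiset_type {α R : Type*} [DecidableEq α] [CommRing R] (x : R) (s : Multiset α)
    (f : α → ℕ) (hf : ∀ a ∈ s, 0 < f a) (hsum : (s.map f).sum = 3) :
    ∏ a ∈ s.toFinset, (1 + x ^ f a) = 1 + x ^ 3 +
      (1 + x) * ((s.toFinset.filter (fun a => f a = 1)).card * x * (1 - x) +
        (s.toFinset.filter (fun a => f a = 1 ∧ s.count a = 1)).card * x ^ 2) := by
  have hcard : s.card ≤ 3 := by
    have := Multiset.card_nsmul_le_sum (s := s.map f) (a := 1) (by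
      intro y hy
      obtain ⟨a, ha, rfl⟩ := Multiset.mem_map.mp hy
      exact hf a ha)
    simpa [hsum] using this
  interval_cases hc : s.card
  · rw [Multiset.card_eq_zero] at hc
    subst hc
    simp at hsum
  · obtain ⟨a, rfl⟩ := Multiset.card_eq_one.mp hc
    simp at hsum
    simp [Finset.filter_singleton, hsum]
  · obtain ⟨a, b, rfl⟩ := Multiset.card_eq_two.mp hc
    have ha := hf a (by simp)
    have hb := hf b (by simp)
    simp at hsum
    have hab : a ≠ b := by
      rintro rfl
      omega
    have : (f a = 1 ∧ f b = 2) ∨ (f a = 2 ∧ f b = 1) := by omega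
    rcases this with ⟨h1, h2⟩ | ⟨h1, h2⟩
    · simp [Finset.filter_insert, Finset.filter_singleton, h1, h2, hab, hab.symm, Multiset.count_singleton]
      ring
    · simp [Finset.filter_insert, Finset.filter_singleton, h1, h2, hab, hab.symm, Multiset.count_singleton]
      ring
  · obtain ⟨a, b, c, rfl⟩ := Multiset.card_eq_three.mp hc
    have ha := hf a (by simp)
    have hb := hf b (by simp)
    have hc := hf c (by simp)
    simp at hsum
    have h1 : f a = 1 := by omega
    have h2 : f b = 1 := by omega
    have h3 : f c = 1 := by omega
    by_cases hab : a = b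
    · subst hab
      by_cases hac : a = c
      · subst hac
        simp [Finset.filter_singleton, h1]
        ring
      · simp [Finset.filter_insert, Finset.filter_singleton, h1, h2, h3, hac, Ne.symm hac, Multiset.count_singleton]
        ring
    · by_cases hac : a = c
      · subst hac
        simp [Finset.filter_insert, Finset.filter_singleton, h1, h2, h3, hab, Ne.symm hab, Multiset.count_singleton]
        ring
      · by_cases hbc : b = c
        · subst hbc
          simp [Finset.filter_insert, Finset.filter_singleton, h1, h2, h3, hab, Ne.symm hab, Multiset.count_singleton]
          ring
        · simp [Finset.filter_insert, Finset.filter_singleton, h1, h2, h3, hab, Ne.symm hab, hac, Ne.symm hac, hbc, Ne.symm hbc, Multiset.count_singleton]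
          ring

end Combi

section NF
open scoped NumberField
open UniqueFactorizationMonoid
variable {K : Type} [Field K] [NumberField K]

/-- multiset of prime factors of `p` -/
noncomputable def facs (K : Type) [Field K] [NumberField K] (p : ℕ) : Multiset (Ideal (𝓞 K)) :=
  normalizedFactors (Ideal.span {(p : 𝓞 K)})

/-- exponent of the norm -/
noncomputable def fdeg (p : ℕ) (P : Ideal (𝓞 K)) : ℕ := Nat.log p (Ideal.absNorm P)

lemma span_ne {p : ℕ} (hp : p.Prime) : Ideal.span {(p : 𝓞 K)} ≠ 0 := by
  rw [Ideal.zero_eq_bot, Ne, Ideal.span_singleton_eq_bot]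
  exact_mod_cast hp.ne_zero

lemma mem_facs {p : ℕ} (hp : p.Prime) {P : Ideal (𝓞 K)} :
    P ∈ facs K p ↔ P.IsPrime ∧ (p : 𝓞 K) ∈ P := by
  have h := Ideal.mem_normalizedFactors_iff (p := P) (I := Ideal.span {(p : 𝓞 K)}) (span_ne hp)
  rw [Ideal.span_singleton_le_iff_mem] at h
  exact h

lemma facs_ne_bot {p : ℕ} (hp : p.Prime) {P : Ideal (𝓞 K)} (h : P ∈ facs K p) : P ≠ ⊥ := by
  rintro rfl
  have := ((mem_facs hp).mp h).2
  rw [Ideal.mem_bot] at this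
  exact hp.ne_zero (by exact_mod_cast this)

lemma norm_facs (hdeg : Module.finrank ℚ K = 3) {p : ℕ} (hp : p.Prime) {P : Ideal (𝓞 K)}
    (h : P ∈ facs K p) : Ideal.absNorm P = p ^ fdeg p P ∧ 0 < fdeg p P := by
  have h1 : Ideal.absNorm P ∣ p ^ 3 := by
    rw [← absNorm_span_nat hdeg p]
    exact Ideal.absNorm_dvd_absNorm_of_le
      (by rw [Ideal.span_singleton_le_iff_mem]; exact ((mem_facs hp).mp h).2)
  obtain ⟨k, -, hk⟩ := (Nat.dvd_prime_pow hp).mp h1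
  have h2 : fdeg p P = k := by rw [fdeg, hk, Nat.log_pow hp.one_lt]
  refine ⟨by rw [h2, hk], ?_⟩
  rw [h2]
  by_contra h0
  have : k = 0 := by omega
  rw [this, pow_zero, Ideal.absNorm_eq_one_iff] at hk
  exact ((mem_facs hp).mp h).1.ne_top hk

lemma sum_facs (hdeg : Module.finrank ℚ K = 3) {p : ℕ} (hp : p.Prime) :
    ((facs K p).map (fdeg p)).sum = 3 := by
  have h1 : (facs K p).prod = Ideal.span {(p : 𝓞 K)} :=
    Ideal.prod_normalizedFactors_eq_self (span_ne hp)
  have h2 := congrArg Ideal.absNorm h1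
  rw [absNorm_span_nat hdeg, map_multiset_prod,
    Multiset.map_congr rfl (fun P hP => (norm_facs hdeg hp hP).1)] at h2
  have h3 : ((facs K p).map (fun P => p ^ fdeg p P)).prod = p ^ ((facs K p).map (fdeg p)).sum := by
    induction (facs K p) using Multiset.induction_on with
    | empty => simp
    | cons a s ih => simp [pow_add, ih]
  rw [h3] at h2
  exact Nat.pow_right_injective hp.two_le h2

open Classical in
lemma mem_pow_iff {p : ℕ} (hp : p.Prime) {P : Ideal (𝓞 K)} (h : P ∈ facs K p) (k b : ℕ) :
    (p : 𝓞 K) ^ k ∈ P ^ b ↔ b ≤ k * (facs K p).count P := by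
  have hirr : Irreducible P := irreducible_of_normalized_factor P h
  rw [← Ideal.dvd_span_singleton, ← Ideal.span_singleton_pow,
    dvd_iff_normalizedFactors_le_normalizedFactors (pow_ne_zero _ hirr.ne_zero)
      (pow_ne_zero _ (span_ne hp)), normalizedFactors_pow, normalizedFactors_pow,
    normalizedFactors_irreducible hirr, normalize_eq, Multiset.nsmul_singleton,
    ← Multiset.le_count_iff_replicate_le, Multiset.count_nsmul]
  rfl

open Classical in
lemma ISet_zero (hdeg : Module.finrank ℚ K = 3) {p : ℕ} (hp : p.Prime) :
    (ISet K p 0).ncard = ((facs K p).toFinset.filter (fun P => fdeg p P = 1)).card := by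
  rw [← Set.ncard_coe_finset]
  congr 1
  ext I
  simp only [ISet, Set.mem_ofPred_eq, Finset.coe_filter, Multiset.mem_toFinset, zero_add, pow_one,
    pow_zero]
  constructor
  · rintro ⟨h1, h2⟩
    have hI : I ∈ facs K p := by
      rw [mem_facs hp]
      refine ⟨Ideal.isPrime_of_irreducible_absNorm (by rw [h1]; exact hp), ?_⟩
      have := Ideal.absNorm_mem I
      rwa [h1] at this
    refine ⟨hI, ?_⟩
    rw [fdeg, h1]
    simpa using Nat.log_pow hp.one_lt 1
  · rintro ⟨h1, h2⟩
    refine ⟨?_, ?_⟩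
    · rw [(norm_facs hdeg hp h1).1, h2, pow_one]
    · rw [← Ideal.eq_top_iff_one]
      exact ((mem_facs hp).mp h1).1.ne_top

lemma ISet_spec (hdeg : Module.finrank ℚ K = 3) {p : ℕ} (hp : p.Prime) {k : ℕ} {I : Ideal (𝓞 K)}
    (hI : I ∈ ISet K p k) : ∃ P ∈ facs K p, fdeg p P = 1 ∧ I = P ^ (k + 1) := by
  obtain ⟨h1, h2⟩ := hI
  have hmem : (p : 𝓞 K) ^ (k + 1) ∈ I := by
    have := Ideal.absNorm_mem I
    rwa [h1, Nat.cast_pow] at this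
  have htop : I.toAddSubgroup ⊔ AddSubgroup.zmultiples (1 : 𝓞 K) = ⊤ := by
    have := index_sup_zmultiples (k := k) hp I.toAddSubgroup (1 : 𝓞 K) (by simpa using h2)
      (by simpa using hmem)
    rw [← absNorm_eq_index, h1] at this
    rw [← AddSubgroup.index_eq_one]
    exact Nat.eq_of_mul_eq_mul_left (pow_pos hp.pos (k + 1)) (by rw [this, mul_one])
  have hnorm0 : Ideal.absNorm I ≠ 0 := by rw [h1]; exact pow_ne_zero _ hp.ne_zero
  have hI0 : I ≠ 0 := by
    rintro rfl
    simp at hnorm0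
  have hIt : I ≠ ⊤ := by
    rintro rfl
    exact h2 trivial
  have huniq : ∀ P : Ideal (𝓞 K), P.IsPrime → I ≤ P → P = I ⊔ Ideal.span {(p : 𝓞 K)} := by
    intro P hP hIP
    have hpP : (p : 𝓞 K) ∈ P := hP.mem_of_pow_mem _ (hIP hmem)
    apply le_antisymm
    · intro a ha
      have : a ∈ I.toAddSubgroup ⊔ AddSubgroup.zmultiples (1 : 𝓞 K) := htop ▸ AddSubgroup.mem_top a
      obtain ⟨i, hi, _, ⟨n, rfl⟩, rfl⟩ := AddSubgroup.mem_sup.mp this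
      simp only [zsmul_one] at ha ⊢
      have hn : (n : 𝓞 K) ∈ P := by
        have := P.sub_mem ha (hIP hi)
        rwa [add_sub_cancel_left] at this
      have hpn : (p : ℤ) ∣ n := by
        by_contra hnd
        have hco : IsCoprime (p : ℤ) n :=
          (Nat.prime_iff_prime_int.mp hp).coprime_iff_not_dvd.mpr hnd
        obtain ⟨u, v, huv⟩ := hco
        apply hP.ne_top
        rw [Ideal.eq_top_iff_one]
        have := P.add_mem (P.mul_mem_left (u : 𝓞 K) hpP) (P.mul_mem_left (v : 𝓞 K) hn)
        have e : (u : 𝓞 K) * (p : 𝓞 K) + v * n = 1 := by exact_mod_cast congrArg (Int.cast : ℤ → 𝓞 K) huv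
        rwa [e] at this
      obtain ⟨m, rfl⟩ := hpn
      refine Ideal.add_mem _ (Ideal.mem_sup_left hi) (Ideal.mem_sup_right ?_)
      rw [Ideal.mem_span_singleton]
      exact ⟨m, by push_cast; rfl⟩
    · exact sup_le hIP (by rwa [Ideal.span_singleton_le_iff_mem])
  obtain ⟨P, hPm, hIP⟩ := Ideal.exists_le_maximal I hIt
  have hP := hPm.isPrime
  have hpP : (p : 𝓞 K) ∈ P := hP.mem_of_pow_mem _ (hIP hmem)
  have hPf : P ∈ facs K p := (mem_facs hp).mpr ⟨hP, hpP⟩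
  have hnP : Ideal.absNorm P = p := by
    have h4 := index_sup_zmultiples (k := 0) hp P.toAddSubgroup (1 : 𝓞 K)
      (by simpa using (fun hc => hP.ne_top ((Ideal.eq_top_iff_one P).mpr hc)))
      (by simpa using hpP)
    have h5 : P.toAddSubgroup ⊔ AddSubgroup.zmultiples (1 : 𝓞 K) = ⊤ := by
      rw [eq_top_iff, ← htop]
      exact sup_le_sup_right (show I.toAddSubgroup ≤ P.toAddSubgroup from hIP) _
    rw [h5, AddSubgroup.index_top, ← absNorm_eq_index] at h4
    simpa using h4.symm
  refine ⟨P, hPf, ?_, ?_⟩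
  · rw [fdeg, hnP]
    simpa using Nat.log_pow hp.one_lt 1
  · have hrep : normalizedFactors I = Multiset.replicate (normalizedFactors I).card P := by
      rw [Multiset.eq_replicate_card]
      intro Q hQ
      have := (Ideal.mem_normalizedFactors_iff hI0).mp hQ
      rw [huniq Q this.1 this.2, ← huniq P hP hIP]
    have hprod := Ideal.prod_normalizedFactors_eq_self hI0
    rw [hrep, Multiset.prod_replicate] at hprod
    set m := (normalizedFactors I).card
    have : m = k + 1 := by
      rw [← hprod, map_pow, hnP] at h1
      exact Nat.pow_right_injective hp.two_le h1
    rw [← this, hprod]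

open Classical in
lemma ISet_succ (hdeg : Module.finrank ℚ K = 3) {p : ℕ} (hp : p.Prime) (k : ℕ) :
    (ISet K p (k + 1)).ncard = ((facs K p).toFinset.filter
      (fun P => fdeg p P = 1 ∧ (facs K p).count P = 1)).card := by
  symm
  rw [← Set.ncard_coe_finset]
  refine Set.ncard_congr (fun P _ => P ^ (k + 2)) ?_ ?_ ?_
  · intro P hP
    simp only [Finset.coe_filter, Multiset.mem_toFinset, Set.mem_ofPred_eq] at hP
    obtain ⟨h1, h2, h3⟩ := hP
    refine ⟨?_, ?_⟩
    · rw [map_pow, (norm_facs hdeg hp h1).1, h2, pow_one]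
    · rw [mem_pow_iff hp h1, h3]
      omega
  · intro P Q hP hQ hPQ
    simp only [Finset.coe_filter, Multiset.mem_toFinset, Set.mem_ofPred_eq] at hP hQ
    have hPp := ((mem_facs hp).mp hP.1).1
    have hQp := ((mem_facs hp).mp hQ.1).1
    have hle : P ≤ Q := hQp.le_of_pow_le (n := k + 2) (hPQ ▸ Ideal.pow_le_self (by omega))
    exact (hPp.isMaximal (facs_ne_bot hp hP.1)).eq_of_le hQp.ne_top hle
  · intro I hI
    obtain ⟨P, hP, h1, rfl⟩ := ISet_spec hdeg hp hI
    refine ⟨P, ?_, rfl⟩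
    simp only [Finset.coe_filter, Multiset.mem_toFinset, Set.mem_ofPred_eq]
    refine ⟨hP, h1, ?_⟩
    have h2 := hI.2
    rw [mem_pow_iff hp hP] at h2
    have h3 : 0 < (facs K p).count P := Multiset.count_pos.mpr hP
    by_contra h4
    have h5 : 2 ≤ (facs K p).count P := by omega
    apply h2
    nlinarith

end NF


set_option linter.unusedSectionVars false
set_option linter.unusedVariables false
set_option linter.unusedSimpArgs false

section NF
open scoped NumberField
open UniqueFactorizationMonoid PowerSeries
variable {K : Type} [Field K] [NumberField K]

/-- ideals with norm^d = p^k supported on `Q` -/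
def SuppSet (d p : ℕ) (Q : Finset (Ideal (𝓞 K))) (k : ℕ) : Set (Ideal (𝓞 K)) :=
  {I | Ideal.absNorm I ^ d = p ^ k ∧ ∀ P : Ideal (𝓞 K), P.IsPrime → I ≤ P → P ∈ Q}

lemma SuppSet_finite {d p : ℕ} (hd : d ≠ 0) (hp : p.Prime) (Q : Finset (Ideal (𝓞 K))) (k : ℕ) :
    (SuppSet d p Q k).Finite := by
  refine (Ideal.finite_setOfPred_absNorm_le (S := 𝓞 K) (p ^ k)).subset ?_
  rintro I ⟨h1, -⟩
  show Ideal.absNorm I ≤ p ^ k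
  rw [← h1]
  exact Nat.le_self_pow hd _

lemma SuppSet_norm_ne {d p : ℕ} (hd : d ≠ 0) (hp : p.Prime) {Q : Finset (Ideal (𝓞 K))} {k : ℕ}
    {I : Ideal (𝓞 K)} (h : I ∈ SuppSet d p Q k) : Ideal.absNorm I ≠ 0 := by
  intro h0
  have := h.1
  rw [h0, zero_pow hd] at this
  exact pow_ne_zero _ hp.ne_zero this.symm

lemma SuppSet_ne_bot {d p : ℕ} (hd : d ≠ 0) (hp : p.Prime) {Q : Finset (Ideal (𝓞 K))} {k : ℕ}
    {I : Ideal (𝓞 K)} (h : I ∈ SuppSet d p Q k) : I ≠ ⊥ := by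
  rintro rfl
  exact SuppSet_norm_ne hd hp h Ideal.absNorm_bot

lemma SuppSet_empty {d p : ℕ} (hp : p.Prime) (k : ℕ) :
    (SuppSet (K := K) d p ∅ k).ncard = if k = 0 then 1 else 0 := by
  have htop : ∀ I ∈ SuppSet (K := K) d p ∅ k, I = ⊤ := by
    rintro I ⟨-, h2⟩
    by_contra h
    obtain ⟨P, hP, hIP⟩ := Ideal.exists_le_maximal I h
    exact absurd (h2 P hP.isPrime hIP) (by simp)
  split_ifs with hk
  · rw [Set.ncard_eq_one]
    refine ⟨⊤, Set.eq_singleton_iff_unique_mem.mpr ⟨⟨by simp [hk], ?_⟩, htop⟩⟩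
    intro P hP hle
    exact absurd (top_le_iff.mp hle) hP.ne_top
  · refine (congrArg Set.ncard (Set.eq_empty_of_forall_notMem ?_)).trans (Set.ncard_empty _)
    intro I hI
    have h1 := hI.1
    rw [htop I hI, Ideal.absNorm_top, one_pow] at h1
    exact (Nat.one_lt_pow hk hp.one_lt).ne h1

open Classical in
lemma SuppSet_insert (hdeg : Module.finrank ℚ K = 3) {d p : ℕ} (hd : d ≠ 0) (hp : p.Prime)
    (Q : Finset (Ideal (𝓞 K))) {P : Ideal (𝓞 K)} (hP : P ∈ facs K p) (hPQ : P ∉ Q) (k : ℕ) :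
    (SuppSet d p (insert P Q) k).ncard = (SuppSet d p Q k).ncard +
      if d * fdeg p P ≤ k then (SuppSet d p (insert P Q) (k - d * fdeg p P)).ncard else 0 := by
  obtain ⟨hPp, hpP⟩ := (mem_facs hp).mp hP
  have hP0 := facs_ne_bot hp hP
  have hnP := (norm_facs hdeg hp hP).1
  set D : Set (Ideal (𝓞 K)) := {I ∈ SuppSet d p (insert P Q) k | I ≤ P} with hD
  have hunion : SuppSet d p (insert P Q) k = SuppSet d p Q k ∪ D := by
    ext I
    constructor
    · intro hI
      by_cases hle : I ≤ P
      · exact Or.inr ⟨hI, hle⟩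
      · refine Or.inl ⟨hI.1, fun P' h1 h2 => ?_⟩
        rcases Finset.mem_insert.mp (hI.2 P' h1 h2) with h | h
        · exact absurd (h ▸ h2) hle
        · exact h
    · rintro (hI | hI)
      · exact ⟨hI.1, fun P' h1 h2 => Finset.mem_insert_of_mem (hI.2 P' h1 h2)⟩
      · exact hI.1
  have hdisj : Disjoint (SuppSet d p Q k) D := by
    rw [Set.disjoint_left]
    intro I h1 h2
    exact hPQ (h1.2 P hPp h2.2)
  have hfin := SuppSet_finite hd hp (insert P Q) k
  have hDfin : D.Finite := hfin.subset (fun I hI => hI.1)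
  conv_lhs => rw [hunion]
  rw [Set.ncard_union_eq hdisj (SuppSet_finite hd hp Q k) hDfin]
  congr 1
  have hnPd : Ideal.absNorm P ^ d = p ^ (d * fdeg p P) := by rw [hnP, ← pow_mul, mul_comm]
  split_ifs with hk
  · symm
    refine Set.ncard_congr (fun J _ => P * J) ?_ ?_ ?_
    · intro J hJ
      refine ⟨⟨?_, ?_⟩, Ideal.mul_le_left⟩
      · rw [map_mul, mul_pow, hJ.1, hnPd, ← pow_add]
        congr 1
        omega
      · intro P' h1 h2
        rcases (h1.mul_le).mp h2 with h | h
        · rw [(hPp.isMaximal hP0).eq_of_le h1.ne_top h]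
          exact Finset.mem_insert_self _ _
        · exact hJ.2 P' h1 h
    · intro J J' _ _ h
      exact mul_left_cancel₀ hP0 h
    · rintro I ⟨hI, hIP⟩
      obtain ⟨J, rfl⟩ := Ideal.dvd_iff_le.mpr hIP
      refine ⟨J, ⟨?_, fun P' h1 h2 => hI.2 P' h1 (Ideal.mul_le_right.trans h2)⟩, rfl⟩
      have := hI.1
      rw [map_mul, mul_pow, hnPd] at this
      refine Nat.eq_of_mul_eq_mul_left (pow_pos hp.pos (d * fdeg p P)) ?_
      rw [this, ← pow_add]
      congr 1
      omega
  · refine (congrArg Set.ncard (Set.eq_empty_of_forall_notMem ?_)).trans (Set.ncard_empty _)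
    rintro I ⟨hI, hIP⟩
    obtain ⟨J, rfl⟩ := Ideal.dvd_iff_le.mpr hIP
    have := hI.1
    rw [map_mul, mul_pow, hnPd] at this
    have h3 : p ^ (d * fdeg p P) ∣ p ^ k := ⟨_, this.symm⟩
    exact hk ((Nat.pow_dvd_pow_iff_le_right hp.one_lt).mp h3)

/-- generating series -/
noncomputable def ZS (d p : ℕ) (Q : Finset (Ideal (𝓞 K))) : PowerSeries ℤ :=
  PowerSeries.mk fun k => ((SuppSet d p Q k).ncard : ℤ)

open Classical in
lemma ZS_mul (hdeg : Module.finrank ℚ K = 3) {d p : ℕ} (hd : d ≠ 0) (hp : p.Prime)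
    (Q : Finset (Ideal (𝓞 K))) (hQ : ∀ P ∈ Q, P ∈ facs K p) :
    ZS d p Q * ∏ P ∈ Q, (1 - (X : PowerSeries ℤ) ^ (d * fdeg p P)) = 1 := by
  induction Q using Finset.induction_on with
  | empty =>
    rw [Finset.prod_empty, mul_one]
    ext k
    rw [ZS, coeff_mk, SuppSet_empty hp, coeff_one]
    split_ifs <;> simp
  | insert P Q hPQ ih =>
    rw [Finset.prod_insert hPQ, ← mul_assoc]
    have : ZS d p (insert P Q) * (1 - (X : PowerSeries ℤ) ^ (d * fdeg p P)) = ZS d p Q := by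
      rw [mul_sub, mul_one, sub_eq_iff_eq_add]
      ext k
      rw [map_add, coeff_mul_X_pow', ZS, ZS, coeff_mk, coeff_mk, coeff_mk,
        SuppSet_insert hdeg hd hp Q (hQ P (Finset.mem_insert_self _ _)) hPQ k]
      push_cast
      split_ifs <;> rfl
    rw [this]
    exact ih (fun P' h => hQ P' (Finset.mem_insert_of_mem h))

open Classical in
lemma SuppSet_full {d p : ℕ} (hd : d ≠ 0) (hp : p.Prime) (k : ℕ) :
    SuppSet d p (facs K p).toFinset k = {I : Ideal (𝓞 K) | Ideal.absNorm I ^ d = p ^ k} := by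
  ext I
  refine ⟨fun h => h.1, fun h => ⟨h, fun P hP hle => ?_⟩⟩
  rw [Multiset.mem_toFinset, mem_facs hp]
  refine ⟨hP, hP.mem_of_pow_mem k (hle ?_)⟩
  have h1 := Ideal.pow_mem_of_mem I (Ideal.absNorm_mem I) d (Nat.pos_of_ne_zero hd)
  have h2 : Ideal.absNorm I ^ d = p ^ k := h
  exact_mod_cast h2 ▸ (by exact_mod_cast h1 : ((Ideal.absNorm I ^ d : ℕ) : 𝓞 K) ∈ I)

open Classical in
/-- The series of subring counts. -/
noncomputable def BS (K : Type) [Field K] [NumberField K] (p : ℕ) : PowerSeries ℤ :=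
  PowerSeries.mk fun k => (Nat.card {S : Subring (𝓞 K) // S.toAddSubgroup.index = p ^ k} : ℤ)

open Classical in
lemma BS_mul (hdeg : Module.finrank ℚ K = 3) {p : ℕ} (hp : p.Prime) :
    BS K p * (1 - (X : PowerSeries ℤ) ^ 2) * (1 - C (p : ℤ) * X ^ 3) =
      ∏ P ∈ (facs K p).toFinset, (1 + (X : PowerSeries ℤ) ^ fdeg p P) := by
  rw [multiset_type X (facs K p) (fdeg p) (fun P hP => (norm_facs hdeg hp hP).2)
    (sum_facs hdeg hp)]
  have h := rkTwo hdeg hp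
  have hR := ringCond h
  have e1 := h.cntR_one' hR
  have e2 := h.cntR_two' hR
  have e0 := h.cntR_zero hR 0

  rw [cntP_eq_ISet hdeg hp 0, ISet_zero hdeg hp] at e1
  rw [cntP_eq_ISet hdeg hp 1, ISet_succ hdeg hp] at e2
  have e3 : ∀ n, cntR p (RC (𝓞 K) p) 0 (n + 3) = _ := fun n => h.cntR_rec hR n
  simp only [cntP_eq_ISet hdeg hp, ISet_succ hdeg hp] at e3
  have hB : BS K p = PowerSeries.mk fun k => (cntR p (RC (𝓞 K) p) 0 k : ℤ) := by
    ext k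
    rw [BS, coeff_mk, coeff_mk, card_subring]
  rw [hB]
  set r := ((facs K p).toFinset.filter (fun P => fdeg p P = 1)).card
  set u := ((facs K p).toFinset.filter (fun P => fdeg p P = 1 ∧ (facs K p).count P = 1)).card
  set B : ℕ → ℕ := cntR p (RC (𝓞 K) p) 0
  set M : PowerSeries ℤ := PowerSeries.mk fun k =>
    if k = 0 then 1 else if k = 1 then (r : ℤ) else u + 1 with hM
  have hBM : (PowerSeries.mk fun k => (B k : ℤ)) * (1 - C (p : ℤ) * X ^ 3) = M := by
    have : (PowerSeries.mk fun k => (B k : ℤ)) * (1 - C (p : ℤ) * X ^ 3) =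
      (PowerSeries.mk fun k => (B k : ℤ)) - C (p : ℤ) * ((PowerSeries.mk fun k => (B k : ℤ)) * X ^ 3) := by ring
    rw [this]
    ext k
    rw [map_sub, coeff_C_mul, coeff_mul_X_pow', hM, coeff_mk, coeff_mk, coeff_mk]
    match k with
    | 0 => simp [e0]
    | 1 => simp [e1]
    | 2 => simp [e2]
    | n + 3 =>
      simp [e3]
      ring
  have hMX : M * (1 - X) = 1 + ((r : ℤ⟦X⟧) - 1) * X + ((u : ℤ⟦X⟧) + 1 - (r : ℤ⟦X⟧)) * X ^ 2 := by
    have h1 : (1 : ℤ⟦X⟧) + ((r : ℤ⟦X⟧) - 1) * X + ((u : ℤ⟦X⟧) + 1 - (r : ℤ⟦X⟧)) * X ^ 2 =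
      1 + C ((r : ℤ) - 1) * X ^ 1 + C ((u : ℤ) + 1 - r) * X ^ 2 := by simp
    have h2 : M * (1 - X) = M - M * X ^ 1 := by ring
    rw [h1, h2]
    obtain ⟨c1, hc1⟩ : ∃ c, c = (r : ℤ) - 1 := ⟨_, rfl⟩
    obtain ⟨c2, hc2⟩ : ∃ c, c = (u : ℤ) + 1 - r := ⟨_, rfl⟩
    rw [← hc1, ← hc2]
    ext k
    rw [map_sub, map_add, map_add, coeff_C_mul, coeff_C_mul, coeff_mul_X_pow', coeff_X_pow,
      coeff_X_pow, coeff_one, hM, coeff_mk, coeff_mk]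
    match k with
    | 0 => simp
    | 1 => simp [hc1]
    | 2 => simp [hc2]
    | n + 3 => simp
  linear_combination (1 + X) * (1 - X) * hBM + (1 + X) * hMX

open Classical in
lemma local_identity (hdeg : Module.finrank ℚ K = 3) {p : ℕ} (hp : p.Prime) (E W : ℤ⟦X⟧)
    (hE : E * (1 - X ^ 2) = 1) (hW : W * (1 - C (p : ℤ) * X ^ 3) = 1) :
    BS K p * ZS 2 p (facs K p).toFinset = ZS 1 p (facs K p).toFinset * E * W := by
  have hB := BS_mul hdeg hp
  have h1 := ZS_mul hdeg (d := 1) one_ne_zero hp (facs K p).toFinset (by simp)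
  have h2 := ZS_mul hdeg (d := 2) two_ne_zero hp (facs K p).toFinset (by simp)
  have h3 : ∏ P ∈ (facs K p).toFinset, (1 - (X : ℤ⟦X⟧) ^ (2 * fdeg p P)) =
      (∏ P ∈ (facs K p).toFinset, (1 - (X : ℤ⟦X⟧) ^ (1 * fdeg p P))) *
      ∏ P ∈ (facs K p).toFinset, (1 + (X : ℤ⟦X⟧) ^ fdeg p P) := by
    rw [← Finset.prod_mul_distrib]
    refine Finset.prod_congr rfl fun P _ => ?_
    ring
  rw [h3, ← hB] at h2
  set Z := ZS 1 p (facs K p).toFinset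
  set Z2 := ZS 2 p (facs K p).toFinset
  set B := BS K p
  set π := ∏ P ∈ (facs K p).toFinset, (1 - (X : ℤ⟦X⟧) ^ (1 * fdeg p P))
  calc B * Z2 = B * Z2 * (Z * π) * (E * (1 - X ^ 2)) * (W * (1 - C (p : ℤ) * X ^ 3)) := by
        rw [h1, hE, hW]; ring
    _ = Z * E * W * (Z2 * (π * (B * (1 - X ^ 2) * (1 - C (p : ℤ) * X ^ 3)))) := by ring
    _ = Z * E * W := by rw [h2, mul_one]

end NF


set_option linter.unusedSectionVars false
set_option linter.unusedVariables false
set_option linter.unusedSimpArgs false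

section Multi

variable {G : Type*} [AddCommGroup G]

lemma index_coprime_of_pmul_le {m n : ℕ} (hmn : m.Coprime n) {L : AddSubgroup G}
    (hL : L.index ≠ 0) (h : pmul m ⊤ ≤ L) : L.index.Coprime n := by
  by_contra hc
  obtain ⟨q, hq, h1, h2⟩ := Nat.Prime.not_coprime_iff_dvd.mp hc
  have := Fact.mk hq
  have : Finite (G ⧸ L) := 
    haveI : L.FiniteIndex := ⟨hL⟩
    AddSubgroup.finite_quotient_of_finiteIndex
  rw [AddSubgroup.index] at h1
  obtain ⟨x, hx⟩ := exists_prime_addOrderOf_dvd_card' q h1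
  obtain ⟨g, rfl⟩ := QuotientAddGroup.mk_surjective x
  have h3 : m • (g : G ⧸ L) = 0 := by
    rw [← QuotientAddGroup.mk_nsmul, QuotientAddGroup.eq_zero_iff]
    exact h (mem_pmul.mpr ⟨g, trivial, rfl⟩)
  have h4 : q ∣ m := hx ▸ addOrderOf_dvd_of_nsmul_eq_zero h3
  exact Nat.not_coprime_of_dvd_of_dvd hq.one_lt h4 h2 hmn

lemma inf_sup_pmul {m n : ℕ} (hmn : m.Coprime n) {H : AddSubgroup G} (hH : H.index = m * n) :
    (H ⊔ pmul m ⊤) ⊓ (H ⊔ pmul n ⊤) = H := by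
  apply le_antisymm _ (le_inf le_sup_left le_sup_left)
  rintro x ⟨h1, h2⟩
  have hk : ∀ y : G, (m * n) • y ∈ H := fun y => hH ▸ nsmul_index_mem H y
  have hn : n • x ∈ H := by
    obtain ⟨a, ha, b, hb, rfl⟩ := AddSubgroup.mem_sup.mp h1
    obtain ⟨y, -, rfl⟩ := mem_pmul.mp hb
    rw [nsmul_add, smul_smul, mul_comm n m]
    exact H.add_mem (H.nsmul_mem ha _) (hk y)
  have hm : m • x ∈ H := by
    obtain ⟨a, ha, b, hb, rfl⟩ := AddSubgroup.mem_sup.mp h2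
    obtain ⟨y, -, rfl⟩ := mem_pmul.mp hb
    rw [nsmul_add, smul_smul]
    exact H.add_mem (H.nsmul_mem ha _) (hk y)
  obtain ⟨u, v, huv⟩ := Nat.isCoprime_iff_coprime.mpr hmn
  have : x = u • (m • x) + v • (n • x) := by
    rw [← natCast_zsmul x m, ← natCast_zsmul x n, smul_smul, smul_smul, ← add_smul, huv, one_smul]
  rw [this]
  exact H.add_mem (H.zsmul_mem hm _) (H.zsmul_mem hn _)

lemma index_sup_pmul {m n : ℕ} (hm : m ≠ 0) (hn : n ≠ 0) (hmn : m.Coprime n) {H : AddSubgroup G}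
    (hH : H.index = m * n) : (H ⊔ pmul m ⊤).index = m ∧ (H ⊔ pmul n ⊤).index = n := by
  have key : ∀ m n : ℕ, m ≠ 0 → n ≠ 0 → m.Coprime n → H.index = m * n →
      (H ⊔ pmul m ⊤).index ∣ m := by
    intro m n hm hn hmn hH
    have h1 : (H ⊔ pmul m ⊤).index ∣ m * n := hH ▸ AddSubgroup.index_dvd_of_le le_sup_left
    have h0 : (H ⊔ pmul m ⊤).index ≠ 0 := fun h => by
      rw [h, zero_dvd_iff] at h1
      exact mul_ne_zero hm hn h1
    exact (index_coprime_of_pmul_le hmn h0 le_sup_right).dvd_of_dvd_mul_right h1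
  have ha := key m n hm hn hmn hH
  have hb := key n m hn hm hmn.symm (by rw [hH, mul_comm])
  have hle := AddSubgroup.index_inf_le (H := H ⊔ pmul m ⊤) (K := H ⊔ pmul n ⊤)
  rw [inf_sup_pmul hmn hH, hH] at hle
  have ha' := Nat.le_of_dvd (Nat.pos_of_ne_zero hm) ha
  have hb' := Nat.le_of_dvd (Nat.pos_of_ne_zero hn) hb
  have hm' := Nat.pos_of_ne_zero hm
  have hn' := Nat.pos_of_ne_zero hn
  constructor
  · apply le_antisymm ha'
    by_contra h
    push Not at h
    nlinarith
  · apply le_antisymm hb'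
    by_contra h
    push Not at h
    nlinarith

lemma index_inf_coprime {m n : ℕ} (hm : m ≠ 0) (hn : n ≠ 0) (hmn : m.Coprime n)
    {H L : AddSubgroup G} (hH : H.index = m) (hL : L.index = n) : (H ⊓ L).index = m * n := by
  have h1 : m ∣ (H ⊓ L).index := hH ▸ AddSubgroup.index_dvd_of_le inf_le_left
  have h2 : n ∣ (H ⊓ L).index := hL ▸ AddSubgroup.index_dvd_of_le inf_le_right
  have h3 := hmn.mul_dvd_of_dvd_of_dvd h1 h2
  have h4 := AddSubgroup.index_inf_le (H := H) (K := L)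
  rw [hH, hL] at h4
  have h5 : (H ⊓ L).index ≠ 0 := AddSubgroup.index_inf_ne_zero (hH ▸ hm) (hL ▸ hn)
  exact le_antisymm h4 (Nat.le_of_dvd (Nat.pos_of_ne_zero h5) h3)

lemma sup_pmul_inf {m n : ℕ} (hm : m ≠ 0) (hn : n ≠ 0) (hmn : m.Coprime n)
    {H L : AddSubgroup G} (hH : H.index = m) (hL : L.index = n) :
    (H ⊓ L) ⊔ pmul m ⊤ = H := by
  refine RkTwo.eq_of_le_of_index ?_ ?_ (hH ▸ hm)
  · refine sup_le inf_le_left ?_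
    intro x hx
    obtain ⟨y, -, rfl⟩ := mem_pmul.mp hx
    exact hH ▸ nsmul_index_mem H y
  · rw [(index_sup_pmul hm hn hmn (index_inf_coprime hm hn hmn hH hL)).1, hH]

lemma card_index_mul (Pr : AddSubgroup G → Prop) (hinf : ∀ H L, Pr H → Pr L → Pr (H ⊓ L))
    (hsup : ∀ H m, Pr H → Pr (H ⊔ pmul m ⊤)) {m n : ℕ} (hm : m ≠ 0) (hn : n ≠ 0)
    (hmn : m.Coprime n) :
    Nat.card {H : AddSubgroup G // Pr H ∧ H.index = m * n} =
      Nat.card {H : AddSubgroup G // Pr H ∧ H.index = m} *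
      Nat.card {H : AddSubgroup G // Pr H ∧ H.index = n} := by
  rw [← Nat.card_prod]
  refine Nat.card_congr ⟨fun H => (⟨H.1 ⊔ pmul m ⊤, hsup _ _ H.2.1, (index_sup_pmul hm hn hmn H.2.2).1⟩,
    ⟨H.1 ⊔ pmul n ⊤, hsup _ _ H.2.1, (index_sup_pmul hm hn hmn H.2.2).2⟩),
    fun X => ⟨X.1.1 ⊓ X.2.1, hinf _ _ X.1.2.1 X.2.2.1,
      index_inf_coprime hm hn hmn X.1.2.2 X.2.2.2⟩, ?_, ?_⟩
  · rintro ⟨H, h1, h2⟩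
    exact Subtype.ext (inf_sup_pmul hmn h2)
  · rintro ⟨⟨H, h1, h2⟩, ⟨L, h3, h4⟩⟩
    refine Prod.ext (Subtype.ext (sup_pmul_inf hm hn hmn h2 h4)) (Subtype.ext ?_)
    show (H ⊓ L) ⊔ pmul n ⊤ = L
    rw [inf_comm]
    exact sup_pmul_inf hn hm hmn.symm h4 h2

lemma card_inj {α : Type*} (φ : α → AddSubgroup G) (hφ : Function.Injective φ) (n : ℕ) :
    Nat.card {a : α // (φ a).index = n} =
      Nat.card {H : AddSubgroup G // (∃ a, φ a = H) ∧ H.index = n} := by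
  refine Nat.card_congr (Equiv.ofBijective (fun a => ⟨φ a.1, ⟨a.1, rfl⟩, a.2⟩) ⟨?_, ?_⟩)
  · intro a b h
    exact Subtype.ext (hφ (congrArg Subtype.val h))
  · rintro ⟨_, ⟨a, rfl⟩, h⟩
    exact ⟨⟨a, h⟩, rfl⟩

end Multi

section RingMulti
variable {A : Type*} [CommRing A]

lemma subring_card_mul {m n : ℕ} (hm : m ≠ 0) (hn : n ≠ 0) (hmn : m.Coprime n) :
    Nat.card {S : Subring A // S.toAddSubgroup.index = m * n} =
    Nat.card {S : Subring A // S.toAddSubgroup.index = m} *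
    Nat.card {S : Subring A // S.toAddSubgroup.index = n} := by
  have hinj : Function.Injective (fun S : Subring A => S.toAddSubgroup) :=
    Subring.toAddSubgroup_injective
  have h := card_inj _ hinj
  rw [h, h, h]
  refine card_index_mul _ ?_ ?_ hm hn hmn
  · rintro _ _ ⟨S, rfl⟩ ⟨T, rfl⟩
    exact ⟨S ⊓ T, rfl⟩
  · rintro _ k ⟨S, rfl⟩
    refine ⟨⟨⟨⟨⟨((S.toAddSubgroup ⊔ pmul k ⊤ : AddSubgroup A) : Set A), ?_⟩, ?_⟩, ?_, ?_⟩, ?_⟩, ?_⟩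
    · intro a b ha hb
      obtain ⟨x, hx, _, h1, rfl⟩ := AddSubgroup.mem_sup.mp ha
      obtain ⟨y, hy, _, h2, rfl⟩ := AddSubgroup.mem_sup.mp hb
      obtain ⟨z, -, rfl⟩ := mem_pmul.mp h1
      obtain ⟨w, -, rfl⟩ := mem_pmul.mp h2
      refine AddSubgroup.mem_sup.mpr ⟨x * y, S.mul_mem hx hy, k • (x * w + z * y + k • (z * w)),
        mem_pmul.mpr ⟨_, trivial, rfl⟩, ?_⟩
      simp only [nsmul_eq_mul]
      ring
    · exact AddSubgroup.mem_sup_left S.one_mem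
    · intro a b ha hb
      exact AddSubgroup.add_mem _ ha hb
    · exact AddSubgroup.zero_mem _
    · intro a ha
      exact AddSubgroup.neg_mem _ ha
    · rfl

lemma ideal_card_mul {m n : ℕ} (hm : m ≠ 0) (hn : n ≠ 0) (hmn : m.Coprime n) :
    Nat.card {S : Ideal A // S.toAddSubgroup.index = m * n} =
    Nat.card {S : Ideal A // S.toAddSubgroup.index = m} *
    Nat.card {S : Ideal A // S.toAddSubgroup.index = n} := by
  have hinj : Function.Injective (fun S : Ideal A => S.toAddSubgroup) :=
    Submodule.toAddSubgroup_injective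
  have h := card_inj _ hinj
  rw [h, h, h]
  refine card_index_mul _ ?_ ?_ hm hn hmn
  · rintro _ _ ⟨S, rfl⟩ ⟨T, rfl⟩
    exact ⟨S ⊓ T, rfl⟩
  · rintro _ k ⟨S, rfl⟩
    refine ⟨⟨⟨⟨((S.toAddSubgroup ⊔ pmul k ⊤ : AddSubgroup A) : Set A), ?_⟩, ?_⟩, ?_⟩, ?_⟩
    · intro a b ha hb
      exact AddSubgroup.add_mem _ ha hb
    · exact AddSubgroup.zero_mem _
    · intro a b hb
      obtain ⟨y, hy, _, h2, rfl⟩ := AddSubgroup.mem_sup.mp hb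
      obtain ⟨w, -, rfl⟩ := mem_pmul.mp h2
      refine AddSubgroup.mem_sup.mpr ⟨a * y, S.mul_mem_left _ hy, k • (a * w),
        mem_pmul.mpr ⟨_, trivial, rfl⟩, ?_⟩
      simp only [nsmul_eq_mul, smul_eq_mul]
      ring
    · rfl

end RingMulti


set_option linter.unusedSectionVars false
set_option linter.unusedVariables false
set_option linter.unusedSimpArgs false

section Bell
open PowerSeries ArithmeticFunction

/-- Bell series -/
noncomputable def bell (p : ℕ) (f : ArithmeticFunction ℕ) : PowerSeries ℤ :=
  PowerSeries.mk fun k => (f (p ^ k) : ℤ)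

lemma bell_mul {p : ℕ} (hp : p.Prime) (f g : ArithmeticFunction ℕ) :
    bell p (f * g) = bell p f * bell p g := by
  ext k
  rw [bell, coeff_mk, coeff_mul, ArithmeticFunction.mul_apply,
    Nat.sum_divisorsAntidiagonal (fun x y => f x * g y), Nat.sum_divisors_prime_pow hp,
    Finset.Nat.sum_antidiagonal_eq_sum_range_succ
      (fun i j => coeff i (bell p f) * coeff j (bell p g)), Nat.cast_sum]
  refine Finset.sum_congr rfl fun i hi => ?_
  rw [bell, bell, coeff_mk, coeff_mk, Nat.pow_div (by simpa [Nat.lt_succ_iff] using hi) hp.pos]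
  push_cast
  rfl

lemma geom_series (c : ℤ) {d : ℕ} (hd : d ≠ 0) :
    (PowerSeries.mk fun k => if d ∣ k then c ^ (k / d) else 0) * (1 - C c * X ^ d) = 1 := by
  set F : PowerSeries ℤ := PowerSeries.mk fun k => if d ∣ k then c ^ (k / d) else 0 with hF
  have : F * (1 - C c * X ^ d) = F - C c * (F * X ^ d) := by ring
  rw [this]
  ext k
  rw [map_sub, coeff_C_mul, coeff_mul_X_pow', hF, coeff_mk, coeff_mk, coeff_one]
  have hd' := Nat.pos_of_ne_zero hd
  by_cases hdk : d ∣ k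
  · obtain ⟨m, rfl⟩ := hdk
    rcases m with _ | m
    · simp [hd]
    · have h1 : d * (m + 1) - d = d * m := by rw [mul_add, mul_one, Nat.add_sub_cancel]
      have h2 : d ≤ d * (m + 1) := Nat.le_mul_of_pos_right d (Nat.succ_pos m)
      have h3 : d * (m + 1) ≠ 0 := by positivity
      rw [h1, if_pos (dvd_mul_right _ _), if_pos h2, if_pos (dvd_mul_right _ _), if_neg h3,
        Nat.mul_div_cancel_left _ hd', Nat.mul_div_cancel_left _ hd']
      ring
  · have hk : k ≠ 0 := by
      rintro rfl
      simp at hdk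
    rw [if_neg hdk, if_neg hk]
    split_ifs with h1 h2
    · exact absurd ((Nat.dvd_sub_iff_left h1 (dvd_refl d)).mp h2) hdk
    · simp
    · simp

end Bell

section Pl
open Classical in
/-- `pl d g (k^d) = g k`, and zero elsewhere. -/
noncomputable def pl (d : ℕ) (g : ℕ → ℕ) : ArithmeticFunction ℕ where
  toFun n := if h : n ≠ 0 ∧ ∃ k, k ^ d = n then g (Classical.choose h.2) else 0
  map_zero' := by simp

lemma pl_pow {d : ℕ} (hd : d ≠ 0) (g : ℕ → ℕ) {k : ℕ} (hk : k ≠ 0) : pl d g (k ^ d) = g k := by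
  have h : k ^ d ≠ 0 ∧ ∃ l, l ^ d = k ^ d := ⟨pow_ne_zero _ hk, k, rfl⟩
  show (if h : k ^ d ≠ 0 ∧ ∃ l, l ^ d = k ^ d then g (Classical.choose h.2) else 0) = g k
  rw [dif_pos h]
  congr 1
  exact Nat.pow_left_injective hd (Classical.choose_spec h.2)

lemma pl_of_not {d : ℕ} (g : ℕ → ℕ) {n : ℕ} (hn : ¬ ∃ k, k ^ d = n) : pl d g n = 0 :=
  dif_neg (fun h => hn h.2)

lemma pl_mult {d : ℕ} (hd : d ≠ 0) {g : ℕ → ℕ} (h1 : g 1 = 1)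
    (hg : ∀ m n, m ≠ 0 → n ≠ 0 → m.Coprime n → g (m * n) = g m * g n) :
    (pl d g).IsMultiplicative := by
  rw [ArithmeticFunction.IsMultiplicative.iff_ne_zero]
  refine ⟨?_, ?_⟩
  · have := pl_pow hd g one_ne_zero
    rwa [one_pow, h1] at this
  · intro m n hm hn hmn
    by_cases h : ∃ k, k ^ d = m * n
    · obtain ⟨k, hk⟩ := h
      obtain ⟨a, rfl⟩ := exists_eq_pow_of_mul_eq_pow (a := m) (b := n) (c := k) (k := d)
        (by rw [Nat.isUnit_iff]; exact hmn) hk.symm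
      obtain ⟨b, rfl⟩ := exists_eq_pow_of_mul_eq_pow (a := n) (b := a ^ d) (c := k) (k := d)
        (by rw [Nat.isUnit_iff]; exact hmn.symm) (by rw [mul_comm, hk])
      have ha : a ≠ 0 := by
        rintro rfl
        exact hm (zero_pow hd)
      have hb : b ≠ 0 := by
        rintro rfl
        exact hn (zero_pow hd)
      rw [← mul_pow, pl_pow hd g (mul_ne_zero ha hb), pl_pow hd g ha, pl_pow hd g hb]
      exact hg a b ha hb ((Nat.coprime_pow_left_iff (Nat.pos_of_ne_zero hd) _ _).mp
        ((Nat.coprime_pow_right_iff (Nat.pos_of_ne_zero hd) _ _).mp hmn))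
    · rw [pl_of_not g h]
      by_cases h2 : ∃ k, k ^ d = m
      · have h3 : ¬ ∃ k, k ^ d = n := by
          rintro ⟨b, rfl⟩
          obtain ⟨a, rfl⟩ := h2
          exact h ⟨a * b, mul_pow _ _ _⟩
        rw [pl_of_not g h3, mul_zero]
      · rw [pl_of_not g h2, zero_mul]

lemma pl_prime_pow {d : ℕ} (hd : d ≠ 0) (g : ℕ → ℕ) {p : ℕ} (hp : p.Prime) (k : ℕ) :
    pl d g (p ^ k) = if d ∣ k then g (p ^ (k / d)) else 0 := by
  split_ifs with h
  · obtain ⟨m, rfl⟩ := h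
    rw [Nat.mul_div_cancel_left _ (Nat.pos_of_ne_zero hd), mul_comm, pow_mul,
      pl_pow hd g (pow_ne_zero _ hp.ne_zero)]
  · refine pl_of_not g ?_
    rintro ⟨c, hc⟩
    have h1 : c ∣ p ^ k := hc ▸ dvd_pow_self c hd
    obtain ⟨m, -, rfl⟩ := (Nat.dvd_prime_pow hp).mp h1
    rw [← pow_mul] at hc
    exact h ⟨m, by rw [← Nat.pow_right_injective hp.two_le hc, mul_comm]⟩

end Pl

section Arith
open scoped NumberField
open PowerSeries
variable {K : Type} [Field K] [NumberField K]

lemma idealCount_eq {n : ℕ} (hn : n ≠ 0) :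
    idealCount K n = Nat.card {I : Ideal (𝓞 K) // Ideal.absNorm I = n} := by
  unfold idealCount
  refine Nat.card_congr (Equiv.subtypeEquivRight fun I => ⟨fun h => h.2, fun h => ⟨?_, h⟩⟩)
  rintro rfl
  rw [Ideal.absNorm_bot] at h
  exact hn h.symm

lemma idealCount_one : idealCount K 1 = 1 := by
  rw [idealCount_eq one_ne_zero]
  simp [Ideal.absNorm_eq_one_iff]

lemma orderCount_one : orderCount K 1 = 1 := by
  unfold orderCount
  have : ∀ S : Subring (𝓞 K), S.toAddSubgroup.index = 1 ↔ S = ⊤ := by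
    intro S
    rw [AddSubgroup.index_eq_one]
    constructor
    · intro h
      exact Subring.toAddSubgroup_injective h
    · rintro rfl
      rfl
  simp [this]

lemma idealCount_mul (m n : ℕ) (hm : m ≠ 0) (hn : n ≠ 0) (hmn : m.Coprime n) :
    idealCount K (m * n) = idealCount K m * idealCount K n := by
  rw [idealCount_eq hm, idealCount_eq hn, idealCount_eq (mul_ne_zero hm hn)]
  exact ideal_card_mul hm hn hmn

lemma orderCount_mul (m n : ℕ) (hm : m ≠ 0) (hn : n ≠ 0) (hmn : m.Coprime n) :
    orderCount K (m * n) = orderCount K m * orderCount K n :=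
  subring_card_mul hm hn hmn

open Classical in
lemma bell_ideal {d : ℕ} (hd : d ≠ 0) {p : ℕ} (hp : p.Prime) :
    bell p (pl d (idealCount K)) = ZS d p (facs K p).toFinset := by
  ext k
  rw [bell, ZS, coeff_mk, coeff_mk, SuppSet_full hd hp]
  congr 1
  by_cases h : ∃ c, c ^ d = p ^ k
  · obtain ⟨c, hc⟩ := h
    have hc0 : c ≠ 0 := by
      rintro rfl
      rw [zero_pow hd] at hc
      exact pow_ne_zero k hp.ne_zero hc.symm
    rw [← hc, pl_pow hd _ hc0, idealCount_eq hc0]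
    have : {I : Ideal (𝓞 K) | Ideal.absNorm I ^ d = c ^ d} = {I : Ideal (𝓞 K) | Ideal.absNorm I = c} := by
      ext I
      exact ⟨fun h => Nat.pow_left_injective hd h, fun h => congrArg (· ^ d) h⟩
    rw [this]
    rfl
  · rw [pl_of_not _ h]
    symm
    refine (congrArg Set.ncard (Set.eq_empty_of_forall_notMem ?_)).trans (Set.ncard_empty _)
    intro I hI
    exact h ⟨_, hI⟩

lemma bell_order {p : ℕ} (hp : p.Prime) : bell p (pl 1 (orderCount K)) = BS K p := by
  ext k
  rw [bell, BS, coeff_mk, coeff_mk, pl_prime_pow one_ne_zero _ hp, if_pos (one_dvd k), Nat.div_one]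
  rfl

theorem arith_identity (hdeg : Module.finrank ℚ K = 3) :
    pl 1 (orderCount K) * pl 2 (idealCount K) =
      pl 1 (idealCount K) * pl 2 (fun _ => 1) * pl 3 (fun n => n) := by
  rw [ArithmeticFunction.IsMultiplicative.eq_iff_eq_on_prime_powers]
  · intro p k hp
    have hE : bell p (pl 2 (fun _ => 1)) * (1 - X ^ 2) = 1 := by
      have := geom_series 1 (d := 2) two_ne_zero
      rw [map_one, one_mul] at this
      refine Eq.trans ?_ this
      congr 1
      ext k
      rw [bell, coeff_mk, coeff_mk, pl_prime_pow two_ne_zero _ hp]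
      simp
    have hW : bell p (pl 3 (fun n => n)) * (1 - C (p : ℤ) * X ^ 3) = 1 := by
      refine Eq.trans ?_ (geom_series p (d := 3) three_ne_zero)
      congr 1
      ext k
      rw [bell, coeff_mk, coeff_mk, pl_prime_pow three_ne_zero _ hp]
      push_cast
      rfl
    classical
    have := local_identity hdeg hp _ _ hE hW
    rw [← bell_order hp, ← bell_ideal one_ne_zero hp, ← bell_ideal two_ne_zero hp,
      ← bell_mul hp, ← bell_mul hp, ← bell_mul hp] at this
    have h2 := congrArg (coeff k) this
    rw [bell, bell, coeff_mk, coeff_mk] at h2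
    exact_mod_cast h2
  · exact (pl_mult one_ne_zero orderCount_one orderCount_mul).mul
      (pl_mult two_ne_zero idealCount_one idealCount_mul)
  · exact ((pl_mult one_ne_zero idealCount_one idealCount_mul).mul
      (pl_mult two_ne_zero rfl (by simp))).mul (pl_mult three_ne_zero rfl (by simp))

end Arith


set_option linter.unusedSectionVars false
set_option linter.unusedVariables false
set_option linter.unusedSimpArgs false

section Analytic
open scoped NumberField
open Filter

/-- real Dirichlet series terms -/
noncomputable def RT (a : ℕ → ℕ) (s : ℝ) (n : ℕ) : ℝ :=
  if n = 0 then 0 else (a n : ℝ) * (n : ℝ) ^ (-s)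

lemma RT_zero (a : ℕ → ℕ) (s : ℝ) : RT a s 0 = 0 := if_pos rfl

lemma RT_nonneg (a : ℕ → ℕ) (s : ℝ) (n : ℕ) : 0 ≤ RT a s n := by
  unfold RT
  split_ifs
  · exact le_rfl
  · positivity

lemma RT_succ (a : ℕ → ℕ) (s : ℝ) (n : ℕ) :
    RT a s (n + 1) = (a (n + 1) : ℝ) * ((n + 1 : ℕ) : ℝ) ^ (-s) := if_neg (Nat.succ_ne_zero n)

lemma RT_term (a : ℕ → ℕ) (s : ℝ) (n : ℕ) :
    LSeries.term (fun n => (a n : ℂ)) (s : ℂ) n = ((RT a s n : ℝ) : ℂ) := by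
  rw [LSeries.term_def, RT]
  split_ifs with h
  · simp
  · rw [Complex.ofReal_mul, Complex.ofReal_cpow (Nat.cast_nonneg n), Complex.ofReal_neg,
      Complex.cpow_neg, div_eq_mul_inv]
    simp

lemma RT_summable_iff (a : ℕ → ℕ) (s : ℝ) :
    LSeriesSummable (fun n => (a n : ℂ)) (s : ℂ) ↔ Summable (RT a s) := by
  rw [LSeriesSummable, funext (RT_term a s)]
  exact Complex.summable_ofReal

lemma RT_LSeries (a : ℕ → ℕ) (s : ℝ) :
    LSeries (fun n => (a n : ℂ)) (s : ℂ) = ((∑' n, RT a s n : ℝ) : ℂ) := by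
  rw [LSeries, funext (RT_term a s), Complex.ofReal_tsum]

lemma RT_conv (f g : ArithmeticFunction ℕ) {s : ℝ} (hf : Summable (RT f s))
    (hg : Summable (RT g s)) : Summable (RT ⇑(f * g) s) ∧
      ∑' n, RT ⇑(f * g) s n = (∑' n, RT f s n) * ∑' n, RT g s n := by
  have e : ∀ n, (((f * g : ArithmeticFunction ℕ) n : ℕ) : ℂ) =
      ((f : ArithmeticFunction ℂ) * (g : ArithmeticFunction ℂ)) n := by
    intro n
    rw [← ArithmeticFunction.natCoe_mul]
    rfl
  rw [← RT_summable_iff] at hf hg ⊢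
  constructor
  · rw [funext e]
    exact ArithmeticFunction.LSeriesSummable_mul (f := (f : ArithmeticFunction ℂ))
      (g := (g : ArithmeticFunction ℂ)) hf hg
  · have h := ArithmeticFunction.LSeries_mul' (f := (f : ArithmeticFunction ℂ))
      (g := (g : ArithmeticFunction ℂ)) hf hg
    rw [← funext e, RT_LSeries] at h
    have h1 : LSeries (fun n => (f : ArithmeticFunction ℂ) n) s = _ := RT_LSeries f s
    have h2 : LSeries (fun n => (g : ArithmeticFunction ℂ) n) s = _ := RT_LSeries g s
    rw [h1, h2] at h
    exact_mod_cast h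

lemma RT_pl_pow {d : ℕ} (hd : d ≠ 0) (g : ℕ → ℕ) (s : ℝ) (k : ℕ) :
    RT (pl d g) s (k ^ d) = RT g (d * s) k := by
  unfold RT
  by_cases hk : k = 0
  · subst hk
    rw [if_pos (zero_pow hd), if_pos rfl]
  · rw [if_neg (pow_ne_zero d hk), if_neg hk, pl_pow hd g hk, Nat.cast_pow,
      ← Real.rpow_natCast_mul (Nat.cast_nonneg k), mul_neg]

lemma RT_pl_not {d : ℕ} (g : ℕ → ℕ) (s : ℝ) (n : ℕ) (hn : n ∉ Set.range (fun k : ℕ => k ^ d)) :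
    RT (pl d g) s n = 0 := by
  unfold RT
  split_ifs
  · rfl
  · rw [pl_of_not g hn, Nat.cast_zero, zero_mul]

lemma RT_pl_summable {d : ℕ} (hd : d ≠ 0) (g : ℕ → ℕ) (s : ℝ) :
    Summable (RT (pl d g) s) ↔ Summable (RT g (d * s)) := by
  rw [← (Nat.pow_left_injective hd).summable_iff (RT_pl_not g s)]
  rw [show (RT (pl d g) s ∘ fun k : ℕ => k ^ d) = RT g (d * s) from funext (RT_pl_pow hd g s)]

lemma RT_pl_tsum {d : ℕ} (hd : d ≠ 0) (g : ℕ → ℕ) (s : ℝ) :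
    ∑' n, RT (pl d g) s n = ∑' n, RT g (d * s) n := by
  rw [← (Nat.pow_left_injective hd).tsum_eq (f := RT (pl d g) s)]
  · exact tsum_congr (RT_pl_pow hd g s)
  · intro n hn
    by_contra h
    exact hn (RT_pl_not g s n h)

lemma RT_shift_summable (a : ℕ → ℕ) (s : ℝ) :
    Summable (RT a s) ↔ Summable fun n : ℕ => (a (n + 1) : ℝ) * ((n + 1 : ℕ) : ℝ) ^ (-s) := by
  rw [← summable_nat_add_iff 1, funext (RT_succ a s)]

lemma RT_shift_tsum {a : ℕ → ℕ} {s : ℝ} (h : Summable (RT a s)) :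
    ∑' n, RT a s n = ∑' n : ℕ, (a (n + 1) : ℝ) * ((n + 1 : ℕ) : ℝ) ^ (-s) := by
  rw [h.tsum_eq_zero_add, RT_zero, zero_add, funext (RT_succ a s)]

variable (K : Type) [Field K] [NumberField K]

lemma RT_ideal {s : ℝ} (hs : 1 < s) : Summable (RT (idealCount K) s) := by
  have h : LSeriesSummable (fun n => ((Nat.card {I : Ideal (𝓞 K) // Ideal.absNorm I = n} : ℝ) : ℂ))
      (s : ℂ) := by
    refine LSeriesSummable_of_sum_norm_bigO_and_nonneg (r := 1)
      (f := fun n => (Nat.card {I : Ideal (𝓞 K) // Ideal.absNorm I = n} : ℝ)) ?_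
      (fun _ => Nat.cast_nonneg _) zero_le_one (by simpa using hs)
    have ht := (NumberField.Ideal.tendsto_norm_le_div_atTop₀ K).comp tendsto_natCast_atTop_atTop
    have hO := ht.isBigO_one ℝ
    have := hO.mul (Asymptotics.isBigO_refl (fun n : ℕ => (n : ℝ)) atTop)
    refine this.congr' ?_ ?_
    · filter_upwards [eventually_ne_atTop 0] with n hn
      have hn' : (n : ℝ) ≠ 0 := Nat.cast_ne_zero.mpr hn
      simp only [Function.comp_apply, Nat.cast_le, ← Nat.cast_sum]
      rw [div_mul_cancel₀ _ hn']
      congr 1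
      rw [← add_left_inj 1, ← Ideal.card_norm_le_eq_card_norm_le_add_one,
        show Finset.Icc 1 n = Finset.Ioc 0 n from Finset.Icc_succ_left_eq_Ioc _ _,
        show 1 = Nat.card {I : Ideal (𝓞 K) // Ideal.absNorm I = 0} by
          simp [Ideal.absNorm_eq_zero_iff],
        Finset.sum_Ioc_add_eq_sum_Icc (n.zero_le),
        ← Finset.card_preimage_eq_sum_card_image_eq
          (fun k _ ↦ Ideal.finite_setOfPred_absNorm_eq k)]
      simp [Set.coe_eq_subtype]
    · filter_upwards with n
      simp
  rw [← RT_summable_iff]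
  refine (LSeriesSummable_congr _ ?_).mp h
  intro n hn
  rw [idealCount_eq hn]
  simp

lemma le_conv (f g : ArithmeticFunction ℕ) (hg : g 1 = 1) {n : ℕ} (hn : n ≠ 0) :
    f n ≤ (f * g) n := by
  rw [ArithmeticFunction.mul_apply]
  have := Finset.single_le_sum (f := fun x : ℕ × ℕ => f x.1 * g x.2) (fun _ _ => Nat.zero_le _)
    (Nat.mem_divisorsAntidiagonal.mpr ⟨mul_one n, hn⟩ : (n, 1) ∈ n.divisorsAntidiagonal)
  simpa [hg] using this

lemma RT_one {s : ℝ} (hs : 1 < s) : Summable (RT (fun _ => 1) s) := by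
  refine Summable.of_nonneg_of_le (RT_nonneg _ _) ?_ (Real.summable_nat_rpow.mpr (by linarith : -s < -1))
  intro n
  unfold RT
  split_ifs
  · positivity
  · simp

lemma RT_id_succ (s : ℝ) (n : ℕ) :
    ((n + 1 : ℕ) : ℝ) * ((n + 1 : ℕ) : ℝ) ^ (-s) = ((n + 1 : ℕ) : ℝ) ^ (1 - s) := by
  have h : (0 : ℝ) < ((n + 1 : ℕ) : ℝ) := by positivity
  rw [sub_eq_add_neg, Real.rpow_add h, Real.rpow_one]

lemma RT_id {s : ℝ} (hs : 2 < s) : Summable (RT (fun n => n) s) := by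
  rw [RT_shift_summable, funext (RT_id_succ s)]
  exact (summable_nat_add_iff (f := fun n : ℕ => (n : ℝ) ^ (1 - s)) 1).mpr
    (Real.summable_nat_rpow.mpr (by linarith))

lemma final (hdeg : Module.finrank ℚ K = 3)
    (s : ℝ) (hs : 1 < s) :
    (Summable fun n : ℕ => (orderCount K (n + 1) : ℝ) * ((n + 1 : ℕ) : ℝ) ^ (-s)) ∧
    (Summable fun n : ℕ => (idealCount K (n + 1) : ℝ) * ((n + 1 : ℕ) : ℝ) ^ (-(2 * s))) ∧
    (Summable fun n : ℕ => (idealCount K (n + 1) : ℝ) * ((n + 1 : ℕ) : ℝ) ^ (-s)) ∧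
    (Summable fun n : ℕ => ((n + 1 : ℕ) : ℝ) ^ (-(2 * s))) ∧
    (Summable fun n : ℕ => ((n + 1 : ℕ) : ℝ) ^ (1 - 3 * s)) ∧
    (∑' n : ℕ, (orderCount K (n + 1) : ℝ) * ((n + 1 : ℕ) : ℝ) ^ (-s)) *
        (∑' n : ℕ, (idealCount K (n + 1) : ℝ) * ((n + 1 : ℕ) : ℝ) ^ (-(2 * s)))
      = (∑' n : ℕ, (idealCount K (n + 1) : ℝ) * ((n + 1 : ℕ) : ℝ) ^ (-s)) *
          (∑' n : ℕ, ((n + 1 : ℕ) : ℝ) ^ (-(2 * s))) *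
          (∑' n : ℕ, ((n + 1 : ℕ) : ℝ) ^ (1 - 3 * s)) := by
  have hj := RT_ideal K hs
  have hj2 := RT_ideal K (show 1 < 2 * s by linarith)
  have hz := RT_one (show 1 < 2 * s by linarith)
  have hw := RT_id (show 2 < 3 * s by linarith)
  have pj : Summable (RT (pl 1 (idealCount K)) s) :=
    (RT_pl_summable one_ne_zero _ s).mpr (by simpa using hj)
  have pj2 : Summable (RT (pl 2 (idealCount K)) s) :=
    (RT_pl_summable two_ne_zero _ s).mpr (by simpa using hj2)
  have pz : Summable (RT (pl 2 (fun _ => 1)) s) :=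
    (RT_pl_summable two_ne_zero _ s).mpr (by simpa using hz)
  have pw : Summable (RT (pl 3 (fun n => n)) s) :=
    (RT_pl_summable three_ne_zero _ s).mpr (by simpa using hw)
  obtain ⟨c1, t1⟩ := RT_conv _ _ pj pz
  obtain ⟨c2, t2⟩ := RT_conv _ _ c1 pw
  rw [← arith_identity hdeg] at c2 t2
  have pb : Summable (RT (pl 1 (orderCount K)) s) := by
    refine Summable.of_nonneg_of_le (RT_nonneg _ _) (fun n => ?_) c2
    unfold RT
    split_ifs with hn
    · exact le_rfl
    · refine mul_le_mul_of_nonneg_right ?_ (by positivity)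
      have h1 : pl 2 (idealCount K) 1 = 1 := by
        have := pl_pow two_ne_zero (idealCount K) one_ne_zero
        rwa [one_pow, idealCount_one] at this
      exact_mod_cast le_conv (pl 1 (orderCount K)) _ h1 hn
  have hb : Summable (RT (orderCount K) s) := by
    simpa using (RT_pl_summable one_ne_zero _ s).mp pb
  obtain ⟨-, t3⟩ := RT_conv _ _ pb pj2
  rw [t3, t1, RT_pl_tsum one_ne_zero, RT_pl_tsum one_ne_zero, RT_pl_tsum two_ne_zero,
    RT_pl_tsum two_ne_zero, RT_pl_tsum three_ne_zero] at t2
  simp only [Nat.cast_one, one_mul, Nat.cast_ofNat] at t2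
  rw [RT_shift_tsum hb, RT_shift_tsum hj2, RT_shift_tsum hj, RT_shift_tsum hz,
    RT_shift_tsum hw] at t2
  have ez : (fun n : ℕ => ((1 : ℕ) : ℝ) * ((n + 1 : ℕ) : ℝ) ^ (-(2 * s))) =
      fun n : ℕ => ((n + 1 : ℕ) : ℝ) ^ (-(2 * s)) := by
    funext n
    rw [Nat.cast_one, one_mul]
  rw [funext (RT_id_succ (3 * s)), ez] at t2
  rw [RT_shift_summable] at hb hj hj2 hz hw
  rw [ez] at hz
  rw [funext (RT_id_succ (3 * s))] at hw
  exact ⟨hb, hj2, hj, hz, hw, t2⟩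

end Analytic

/-- **The order zeta function of a cubic number field** (Datskovsky–Wright): for a number
field `K` of degree `3` and real `s > 1`,
`η_K(s) · ζ_K(2s) = ζ_K(s) · ζ(2s) · ζ(3s-1)` as convergent series, i.e.
`η_K(s) = (ζ_K(s)/ζ_K(2s)) ζ(2s) ζ(3s-1)`. -/
theorem order_zeta_cubic_field
    (K : Type) [Field K] [NumberField K] (hdeg : Module.finrank ℚ K = 3)
    (s : ℝ) (hs : 1 < s) :
    (Summable fun n : ℕ => (orderCount K (n + 1) : ℝ) * ((n + 1 : ℕ) : ℝ) ^ (-s)) ∧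
    (Summable fun n : ℕ => (idealCount K (n + 1) : ℝ) * ((n + 1 : ℕ) : ℝ) ^ (-(2 * s))) ∧
    (Summable fun n : ℕ => (idealCount K (n + 1) : ℝ) * ((n + 1 : ℕ) : ℝ) ^ (-s)) ∧
    (Summable fun n : ℕ => ((n + 1 : ℕ) : ℝ) ^ (-(2 * s))) ∧
    (Summable fun n : ℕ => ((n + 1 : ℕ) : ℝ) ^ (1 - 3 * s)) ∧
    (∑' n : ℕ, (orderCount K (n + 1) : ℝ) * ((n + 1 : ℕ) : ℝ) ^ (-s)) *
        (∑' n : ℕ, (idealCount K (n + 1) : ℝ) * ((n + 1 : ℕ) : ℝ) ^ (-(2 * s)))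
      = (∑' n : ℕ, (idealCount K (n + 1) : ℝ) * ((n + 1 : ℕ) : ℝ) ^ (-s)) *
          (∑' n : ℕ, ((n + 1 : ℕ) : ℝ) ^ (-(2 * s))) *
          (∑' n : ℕ, ((n + 1 : ℕ) : ℝ) ^ (1 - 3 * s)) := by
  exact final K hdeg s hs
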